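/- (Discrete restriction estimate for the parabola.) Let n ≥ 5 be an integer. There exists a constant C = C(n) such that for every integer N ≥ 1 and every function f : ℤ → ℂ, ∫₀¹ | Σ_{x ∈ [−N,N] ∩ ℤ} f(x) e(α x²) |^n dα ≤ C N^{n−2} ( N^{−1} Σ_{x ∈ [−N,N] ∩ ℤ} |f(x)|² )^{n/2}, where e(t) = e^{2πit}. -/

import Mathlib

open scoped BigOperators ENNReal NNReal
open MeasureTheory Finset

noncomputable section

/-- `sphereCount n lam` is the number of lattice points `x ∈ ℤ^n` with
`x₁² + ⋯ + x_n² = lam`. -/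
def sphereCount (n lam : ℕ) : ℕ :=
  {x : Fin n → ℤ | ∑ i, (x i) ^ 2 = (lam : ℤ)}.ncard

/-- The multilinear spherical average
`A_lam[f₁,…,f_n](y) = (1/r_n(lam)) ∑_{|x|² = lam} f₁(y-x₁)⋯f_n(y-x_n)`. -/
def mulAvg (n lam : ℕ) (f : Fin n → ℤ → ℂ) (y : ℤ) : ℂ :=
  (sphereCount n lam : ℂ)⁻¹ *
    ∑ᶠ x ∈ {x : Fin n → ℤ | ∑ i, (x i) ^ 2 = (lam : ℤ)}, ∏ i, f i (y - x i)

/-- The maximal function `A_*[f₁,…,f_n](y) = sup_{lam ≥ 1} |A_lam[f₁,…,f_n](y)|`. -/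
def maxFn (n : ℕ) (f : Fin n → ℤ → ℂ) (y : ℤ) : ℝ≥0∞ :=
  ⨆ (lam : ℕ) (_ : 1 ≤ lam), (‖mulAvg n lam f y‖₊ : ℝ≥0∞)

/-- The `ℓ^p(ℤ)` norm of a complex-valued function, valued in `ℝ≥0∞`. -/
def lpNorm (p : ℝ) (g : ℤ → ℂ) : ℝ≥0∞ :=
  (∑' x : ℤ, (‖g x‖₊ : ℝ≥0∞) ^ p) ^ (1 / p)

/-- The `ℓ^q(ℤ)` norm of an `ℝ≥0∞`-valued function. -/
def lqNormE (q : ℝ) (g : ℤ → ℝ≥0∞) : ℝ≥0∞ :=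
  (∑' x : ℤ, g x ^ q) ^ (1 / q)

/-!
An integral over the circle is an average of sums over translates of the grid of points `j / (4N²)`,
so it is enough to bound the moments of `F(θ) = ∑ f(x) e(θx²)` on that grid. Put `E = ∑ |f(x)|²`. If
`|F| ≥ l` on a set `A` of `R` grid points, duality (the `TT*` argument) and Hölder's inequality give
`l^(2p) R² ≤ E^p ∑ |K(r - s)|^p`, the sum being over `r, s ∈ A`, where `K` is the kernel
`∑_{|x| ≤ N} e(θx²)`.

Weyl differencing and Dirichlet approximation bound `|K|²` by a power saving, plus a major arc term
`N² q⁻¹ (1 + N² |2θ - a/q|)^(-7/8)`. With `p = 17/8` the power `|K|^p` has a majorant built from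
Fejér kernels centred at the fractions `a/q`, whose Fourier coefficients are truncations of the
divisor function `σ₋ₛ` for `s = 1/16`. The moments of `σ₋ₛ` are bounded, which is what avoids a
factor `N^ε`, and Hölder's inequality with the dual large sieve yields `R ≲ (NE / l²)^(17/7)` as
long as `NE / l²` is at most a small power of `N`. Since `34/7 < 5`, these level sets contribute
acceptably to the fifth moment. The smaller values of `|F|` are handled by the fourth moment: its
loss of `N^ε` is absorbed by one further factor `|F|`.
-/

namespace DiscreteRestriction

/-- The additive character `e(t) = exp(2πit)` as a complex number. -/
def e (t : ℝ) : ℂ := Real.fourierChar t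

lemma e_eq_exp (t : ℝ) : e t = Complex.exp (2 * Real.pi * Complex.I * t) := by
  rw [e, Real.fourierChar_apply]
  push_cast
  ring_nf

@[fun_prop]
lemma continuous_e : Continuous e := by
  unfold e
  fun_prop

lemma e_add (s t : ℝ) : e (s + t) = e s * e t := by
  simp only [e, AddChar.map_add_eq_mul, Circle.coe_mul]

@[simp]
lemma norm_e (t : ℝ) : ‖e t‖ = 1 := Circle.norm_coe _

lemma e_nat_mul (n : ℕ) (t : ℝ) : e (n * t) = e t ^ n := by
  simp only [e, ← nsmul_eq_mul, AddChar.map_nsmul_eq_pow, Circle.coe_pow]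

lemma conj_e (t : ℝ) : starRingEnd ℂ (e t) = e (-t) := by
  simp only [e, AddChar.map_neg_eq_inv, Circle.coe_inv_eq_conj]

lemma e_eq_one_iff {t : ℝ} : e t = 1 ↔ ∃ k : ℤ, t = k := by
  rw [e_eq_exp, Complex.exp_eq_one_iff]
  refine exists_congr fun k => ?_
  rw [mul_comm (k : ℂ), mul_right_inj' Complex.two_pi_I_ne_zero]
  norm_cast

lemma e_add_intCast (t : ℝ) (k : ℤ) : e (t + k) = e t := by
  rw [e_add, e_eq_one_iff.2 ⟨k, rfl⟩, mul_one]

lemma e_mul_div_eq_of_modEq {M : ℕ} (hM : 0 < M) {a b : ℤ} (h : a ≡ b [ZMOD M]) (j : ℤ) :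
    e (a * j / M) = e (b * j / M) := by
  obtain ⟨c, hc⟩ := h.symm.dvd
  have ha : (a : ℝ) = b + M * c := by exact_mod_cast (sub_eq_iff_eq_add'.1 hc)
  rw [← e_add_intCast (b * j / M) (c * j), ha]
  congr 1
  push_cast
  field_simp

/-! ### Fourier analysis on `ℤ/M` -/

lemma sum_range_e_mul_div {M : ℕ} (hM : 0 < M) (k : ℤ) :
    ∑ j ∈ range M, e (k * j / M) = if (M : ℤ) ∣ k then (M : ℂ) else 0 := by
  have hM' : (M : ℝ) ≠ 0 := by positivity
  have hpow (j : ℕ) : e (k * j / M) = e (k / M) ^ j := by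
    rw [← e_nat_mul]
    ring_nf
  have hone : e (k / M) = 1 ↔ (M : ℤ) ∣ k := by
    rw [e_eq_one_iff, dvd_def]
    refine exists_congr fun c => ?_
    rw [div_eq_iff hM', mul_comm (c : ℝ)]
    norm_cast
  simp only [hpow]
  split_ifs with h
  · simp [hone.2 h]
  · have hk : e (M * (k / M : ℝ)) = 1 := e_eq_one_iff.2 ⟨k, by field_simp⟩
    rw [geom_sum_eq (mt hone.1 h), ← e_nat_mul, hk, sub_self, zero_div]

lemma norm_sum_sq_eq {ι : Type*} (S : Finset ι) (z : ι → ℂ) :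
    ((‖∑ m ∈ S, z m‖ ^ 2 : ℝ) : ℂ) = ∑ a ∈ S, ∑ b ∈ S, z a * starRingEnd ℂ (z b) := by
  rw [← Complex.normSq_eq_norm_sq, ← Complex.mul_conj, map_sum, sum_mul_sum]

section ModM

variable {ι : Type*} {M : ℕ} {S : Finset ι} {v : ι → ℤ}

theorem parseval_mod (hM : 0 < M)
    (hv : ∀ a ∈ S, ∀ b ∈ S, (M : ℤ) ∣ v a - v b → a = b) (c : ι → ℂ) :
    ∑ j ∈ range M, ‖∑ m ∈ S, c m * e (v m * j / M)‖ ^ 2 = M * ∑ m ∈ S, ‖c m‖ ^ 2 := by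
  classical
  have hterm (a b : ι) (j : ℕ) :
      c a * e (v a * j / M) * starRingEnd ℂ (c b * e (v b * j / M)) =
        c a * starRingEnd ℂ (c b) * e ((v a - v b : ℤ) * j / M) := by
    have harg : ((v a - v b : ℤ) * j / M : ℝ) = v a * j / M + -(v b * j / M) := by
      push_cast
      ring
    rw [map_mul, conj_e, harg, e_add]
    ring
  have hdvd {a b : ι} (ha : a ∈ S) (hb : b ∈ S) : (M : ℤ) ∣ v a - v b ↔ b = a :=
    ⟨fun h => (hv a ha b hb h).symm, by rintro rfl; simp⟩
  have hcomplex : ((∑ j ∈ range M, ‖∑ m ∈ S, c m * e (v m * j / M)‖ ^ 2 : ℝ) : ℂ) =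
      ((M * ∑ m ∈ S, ‖c m‖ ^ 2 : ℝ) : ℂ) := by
    calc ((∑ j ∈ range M, ‖∑ m ∈ S, c m * e (v m * j / M)‖ ^ 2 : ℝ) : ℂ)
        = ∑ a ∈ S, ∑ b ∈ S, c a * starRingEnd ℂ (c b) *
            ∑ j ∈ range M, e ((v a - v b : ℤ) * j / M) := by
          simp only [Complex.ofReal_sum, norm_sum_sq_eq, hterm, mul_sum]
          rw [sum_comm]
          exact sum_congr rfl fun a _ => sum_comm
      _ = ∑ a ∈ S, ∑ b ∈ S, if b = a then c a * starRingEnd ℂ (c b) * M else 0 := by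
          refine sum_congr rfl fun a ha => sum_congr rfl fun b hb => ?_
          rw [sum_range_e_mul_div hM, mul_ite, mul_zero]
          simp only [hdvd ha hb]
      _ = ∑ a ∈ S, (‖c a‖ ^ 2 : ℂ) * M := by
          refine sum_congr rfl fun a ha => ?_
          rw [sum_ite_eq' S a, if_pos ha, Complex.mul_conj']
      _ = ((M * ∑ m ∈ S, ‖c m‖ ^ 2 : ℝ) : ℂ) := by
          rw [← sum_mul, mul_comm]
          push_cast
          rfl
  exact_mod_cast hcomplex

theorem dual_large_sieve (hM : 0 < M)
    (hv : ∀ a ∈ S, ∀ b ∈ S, (M : ℤ) ∣ v a - v b → a = b) {A : Finset ℕ} (hA : A ⊆ range M) :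
    ∑ m ∈ S, ‖∑ j ∈ A, e (v m * j / M)‖ ^ 2 ≤ M * #A := by
  classical
  have hM0 : (M : ℤ) ≠ 0 := by positivity
  let g : ℕ → ℝ := fun k => ‖∑ j ∈ A, e ((j : ℤ) * k / M)‖ ^ 2
  let residue : ι → ℕ := fun m => (v m % M).toNat
  have hresidue (m : ι) : (residue m : ℤ) = v m % M := Int.toNat_of_nonneg (Int.emod_nonneg _ hM0)
  have hg (m : ι) : ‖∑ j ∈ A, e (v m * j / M)‖ ^ 2 = g (residue m) := by
    have hmod : v m ≡ residue m [ZMOD M] := by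
      rw [hresidue]
      exact (Int.mod_modEq _ _).symm
    have hterm (j : ℕ) : e (v m * j / M) = e ((j : ℤ) * (residue m : ℕ) / M) := by
      simpa only [Int.cast_natCast, mul_comm] using e_mul_div_eq_of_modEq hM hmod j
    simp only [g, hterm]
  have hinj : Set.InjOn residue (S : Set ι) := by
    intro a ha b hb hab
    have hmod : v b ≡ v a [ZMOD M] := by
      rw [Int.ModEq, ← hresidue, ← hresidue, hab]
    exact hv a ha b hb hmod.dvd
  have himage : S.image residue ⊆ range M := by
    refine image_subset_iff.2 fun m _ => mem_range.2 ?_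
    zify
    rw [hresidue]
    exact Int.emod_lt_of_pos _ (by positivity)
  have hApart : ∀ a ∈ A, ∀ b ∈ A, (M : ℤ) ∣ (a : ℤ) - b → a = b := by
    intro a ha b hb h
    have ha' := mem_range.1 (hA ha)
    have hb' := mem_range.1 (hA hb)
    have := Int.eq_zero_of_abs_lt_dvd h (by rw [abs_lt]; constructor <;> omega)
    omega
  calc ∑ m ∈ S, ‖∑ j ∈ A, e (v m * j / M)‖ ^ 2
      = ∑ k ∈ S.image residue, g k := by rw [sum_image hinj]; exact sum_congr rfl fun m _ => hg m
    _ ≤ ∑ k ∈ range M, g k := sum_le_sum_of_subset_of_nonneg himage fun _ _ _ => by positivity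
    _ = M * #A := by simpa [g] using parseval_mod hM hApart fun _ => 1

end ModM

lemma four_mul_le_norm_e_sub_one {t δ : ℝ} (h : ∀ k : ℤ, δ ≤ |t - k|) : 4 * δ ≤ ‖e t - 1‖ := by
  have hpi := Real.pi_pos
  set s := t - round t with hs
  have hround : |Real.pi * s| ≤ Real.pi / 2 := by
    rw [abs_mul, abs_of_pos hpi]
    nlinarith [abs_sub_round t]
  have hsin := Real.mul_abs_le_abs_sin hround
  have hes : e t = Complex.exp (Complex.I * ((2 * Real.pi * s : ℝ) : ℂ)) := by
    rw [← sub_add_cancel t (round t), e_add_intCast, e_eq_exp]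
    push_cast [hs]
    ring_nf
  rw [abs_mul, abs_of_pos hpi] at hsin
  rw [hes, Complex.norm_exp_I_mul_ofReal_sub_one]
  calc 4 * δ ≤ 2 * (2 / Real.pi * (Real.pi * |s|)) := by
        field_simp
        linarith [h (round t)]
    _ ≤ ‖2 * Real.sin (2 * Real.pi * s / 2)‖ := by
        rw [Real.norm_eq_abs, abs_mul, abs_two, show 2 * Real.pi * s / 2 = Real.pi * s by ring]
        linarith

lemma norm_sum_Icc_e_le {t δ : ℝ} (hδ : 0 < δ) (h : ∀ k : ℤ, δ ≤ |t - k|) (a b : ℤ) :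
    ‖∑ y ∈ Icc a b, e (t * y)‖ ≤ 1 / (2 * δ) := by
  have hgap := four_mul_le_norm_e_sub_one h
  have hne : e t ≠ 1 := by
    intro h1
    rw [h1, sub_self, norm_zero] at hgap
    linarith
  have hgeom : ∑ y ∈ Icc a b, e (t * y) = e (t * a) * ∑ j ∈ range (b + 1 - a).toNat, e t ^ j := by
    rw [Int.Icc_eq_finset_map, sum_map, mul_sum]
    refine sum_congr rfl fun j _ => ?_
    rw [← e_nat_mul, ← e_add]
    congr 1
    simp
    ring
  have hnum : ‖e t ^ (b + 1 - a).toNat - 1‖ ≤ 2 := by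
    calc _ ≤ ‖e t ^ (b + 1 - a).toNat‖ + ‖(1 : ℂ)‖ := norm_sub_le _ _
      _ = 2 := by rw [norm_pow, norm_e]; norm_num
  rw [hgeom, norm_mul, norm_e, one_mul, geom_sum_eq hne, norm_div,
    div_le_div_iff₀ (by linarith) (by linarith)]
  nlinarith

/-! ### Weyl sums -/

lemma sum_Icc_rpow_sub_one_le {s : ℝ} (hs0 : 0 < s) (hs1 : s ≤ 1) (J : ℕ) :
    ∑ j ∈ Icc 1 J, (j : ℝ) ^ (s - 1) ≤ (J : ℝ) ^ s / s := by
  induction J with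
  | zero => simp [Real.zero_rpow hs0.ne']
  | succ J ih =>
    rw [sum_Icc_succ_top (by omega)]
    set x : ℝ := ((J + 1 : ℕ) : ℝ) with hx
    have hx1 : 1 ≤ x := by rw [hx]; push_cast; linarith [J.cast_nonneg (α := ℝ)]
    have hJ : (J : ℝ) = x * (1 + -x⁻¹) := by rw [hx]; push_cast; field_simp; ring
    have hbernoulli : (J : ℝ) ^ s ≤ x ^ s * (1 + s * -x⁻¹) := by
      have hinv : -1 ≤ -x⁻¹ := neg_le_neg (inv_le_one_of_one_le₀ hx1)
      rw [hJ, Real.mul_rpow (by positivity) (by linarith)]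
      gcongr
      exact rpow_one_add_le_one_add_mul_self hinv hs0.le hs1
    have hpow : x ^ (s - 1) = x ^ s * x⁻¹ := by
      rw [Real.rpow_sub_one (by positivity), div_eq_mul_inv]
    rw [hpow]
    calc ∑ j ∈ Icc 1 J, (j : ℝ) ^ (s - 1) + x ^ s * x⁻¹
        ≤ x ^ s * (1 + s * -x⁻¹) / s + x ^ s * x⁻¹ := by
          gcongr
          exact ih.trans (by gcongr)
      _ = x ^ s / s := by field_simp; ring

lemma sum_Icc_one_div_le (J : ℕ) : ∑ j ∈ Icc 1 J, 1 / (j : ℝ) ≤ 8 * (J : ℝ) ^ (1 / 8 : ℝ) := by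
  calc ∑ j ∈ Icc 1 J, 1 / (j : ℝ) ≤ ∑ j ∈ Icc 1 J, (j : ℝ) ^ (1 / 8 - 1 : ℝ) := by
        refine sum_le_sum fun j hj => ?_
        rw [one_div, ← Real.rpow_neg_one]
        exact Real.rpow_le_rpow_of_exponent_le (by exact_mod_cast (mem_Icc.1 hj).1) (by norm_num)
    _ ≤ (J : ℝ) ^ (1 / 8 : ℝ) / (1 / 8) := sum_Icc_rpow_sub_one_le (by norm_num) (by norm_num) J
    _ = 8 * (J : ℝ) ^ (1 / 8 : ℝ) := by ring

lemma sum_comp_le_mul_sum {ι κ : Type*} [DecidableEq κ] {S : Finset ι} {T : Finset κ} {g : ι → κ}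
    {G : κ → ℝ} {B : ℝ} (hmaps : ∀ i ∈ S, g i ∈ T) (hcard : ∀ k ∈ T, (#{i ∈ S | g i = k} : ℝ) ≤ B)
    (hG : ∀ k ∈ T, 0 ≤ G k) : ∑ i ∈ S, G (g i) ≤ B * ∑ k ∈ T, G k := by
  rw [← sum_fiberwise_of_maps_to hmaps, mul_sum]
  refine sum_le_sum fun k hk => ?_
  rw [sum_congr rfl fun i hi => by rw [(mem_filter.1 hi).2], sum_const, nsmul_eq_mul]
  exact mul_le_mul_of_nonneg_right (hcard k hk) (hG k hk)

lemma sum_multiples_natAbs_le (L : ℕ) {q : ℕ} (hq : 0 < q) {T : ℕ → ℝ} (hT : ∀ j, 0 ≤ T j) :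
    ∑ h ∈ Icc (-L : ℤ) L with (q : ℤ) ∣ h ∧ h ≠ 0, T h.natAbs ≤
      2 * ∑ j ∈ Icc 1 (L / q), T (q * j) := by
  let S : Finset ℤ := {h ∈ Icc (-L : ℤ) L | (q : ℤ) ∣ h ∧ h ≠ 0}
  have hnatAbs : ∀ h ∈ S, h.natAbs = q * (h.natAbs / q) := fun h hh =>
    (Nat.mul_div_cancel' (Int.natCast_dvd.1 (mem_filter.1 hh).2.1)).symm
  have hmaps : ∀ h ∈ S, h.natAbs / q ∈ Icc 1 (L / q) := by
    intro h hh
    obtain ⟨hL, hdvd, h0⟩ := mem_filter.1 hh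
    rw [mem_Icc] at hL ⊢
    exact ⟨Nat.div_pos (Nat.le_of_dvd (by omega) (Int.natCast_dvd.1 hdvd)) hq,
      Nat.div_le_div_right (by omega)⟩
  have hfiber (j : ℕ) : {h ∈ S | h.natAbs / q = j} ⊆ {(q * j : ℤ), -(q * j : ℤ)} := by
    intro h hh
    obtain ⟨hS, rfl⟩ := mem_filter.1 hh
    have : (h.natAbs : ℤ) = q * (h.natAbs / q : ℕ) := by exact_mod_cast hnatAbs h hS
    simp only [mem_insert, mem_singleton]
    omega
  calc ∑ h ∈ S, T h.natAbs = ∑ h ∈ S, T (q * (h.natAbs / q)) :=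
        sum_congr rfl fun h hh => by rw [← hnatAbs h hh]
    _ ≤ 2 * ∑ j ∈ Icc 1 (L / q), T (q * j) :=
        sum_comp_le_mul_sum (G := fun j => T (q * j)) hmaps
          (fun j _ => by exact_mod_cast (card_le_card (hfiber j)).trans card_le_two)
          fun j _ => hT _

/-- The quadratic Weyl sum `∑_{|x| ≤ N} e(θx²)`; it is also the kernel of the operator `TT*`
attached to the restriction problem. -/
def weylSum (N : ℕ) (θ : ℝ) : ℂ := ∑ x ∈ Icc (-N : ℤ) N, e (θ * x ^ 2)

/-- The modulus of the linear sum `∑_y e(2θhy)`, over those `y` with `y` and `y + h` in `[-N, N]`,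
which Weyl differencing of `weylSum N θ` produces at the difference `h`. -/
def differencedSum (N : ℕ) (θ : ℝ) (h : ℤ) : ℝ :=
  ‖∑ y ∈ Icc (max (-N : ℤ) (-N - h)) (min (N : ℤ) (N - h)), e (h * (2 * θ) * y)‖

lemma norm_weylSum_sq_le_sum_differencedSum (N : ℕ) (θ : ℝ) :
    ‖weylSum N θ‖ ^ 2 ≤ ∑ h ∈ Icc (-(2 * N : ℕ) : ℤ) (2 * N : ℕ), differencedSum N θ h := by
  have hmaps : ∀ p ∈ Icc (-N : ℤ) N ×ˢ Icc (-N : ℤ) N,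
      p.1 - p.2 ∈ Icc (-(2 * N : ℕ) : ℤ) (2 * N : ℕ) := by
    intro p hp
    simp only [mem_product, mem_Icc] at *
    omega
  have hdiff : ((‖weylSum N θ‖ ^ 2 : ℝ) : ℂ) = ∑ h ∈ Icc (-(2 * N : ℕ) : ℤ) (2 * N : ℕ),
      ∑ y ∈ Icc (max (-N : ℤ) (-N - h)) (min (N : ℤ) (N - h)),
        e (θ * h ^ 2) * e (h * (2 * θ) * y) := by
    rw [weylSum, norm_sum_sq_eq, ← sum_product', ← sum_fiberwise_of_maps_to hmaps]
    refine sum_congr rfl fun h _ => sum_nbij' (fun p => p.2) (fun y => (y + h, y)) ?_ ?_ ?_ ?_ ?_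
    · intro p hp
      simp only [mem_filter, mem_product, mem_Icc] at *
      omega
    · intro y hy
      simp only [mem_filter, mem_product, mem_Icc] at *
      omega
    · intro p hp
      have := (mem_filter.1 hp).2
      exact Prod.ext (by dsimp only; omega) rfl
    · intro y _
      rfl
    · intro p hp
      have hx : (p.1 : ℝ) = p.2 + h := by exact_mod_cast sub_eq_iff_eq_add'.1 (mem_filter.1 hp).2
      rw [conj_e, ← e_add, ← e_add, hx]
      congr 1
      ring
  rw [← Real.norm_of_nonneg (sq_nonneg ‖weylSum N θ‖), ← Complex.norm_real, hdiff]
  refine (norm_sum_le _ _).trans (sum_le_sum fun h _ => ?_)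
  rw [← mul_sum, norm_mul, norm_e, one_mul, differencedSum]

lemma differencedSum_nonneg (N : ℕ) (θ : ℝ) (h : ℤ) : 0 ≤ differencedSum N θ h := norm_nonneg _

lemma differencedSum_le {N : ℕ} (hN : 1 ≤ N) (θ : ℝ) (h : ℤ) :
    differencedSum N θ h ≤ 3 * N := by
  refine (norm_sum_le _ _).trans ?_
  simp only [norm_e, sum_const, nsmul_eq_mul, mul_one, Int.card_Icc]
  exact_mod_cast (by omega :
    (min (N : ℤ) (N - h) + 1 - max (-(N : ℤ)) (-(N : ℤ) - h)).toNat ≤ 3 * N)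

lemma min_emod_div_le_abs_sub {q : ℕ} {z : ℤ} (hq : 0 < q) (hz : ¬ (q : ℤ) ∣ z) {η : ℝ}
    (hη : |η| ≤ 1 / (4 * q)) (k : ℤ) :
    min ((z % q : ℤ) : ℝ) (q - (z % q : ℤ)) / (2 * q) ≤ |z / q + η - k| := by
  have hq' : (0 : ℝ) < q := by exact_mod_cast hq
  set r : ℤ := z % q with hr
  have hr0 : 1 ≤ r := by
    have := Int.emod_nonneg z (by omega : (q : ℤ) ≠ 0)
    have := mt Int.dvd_of_emod_eq_zero hz
    omega
  have hrq : r + 1 ≤ q := Int.emod_lt_of_pos z (by omega)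
  have hdist : min (r : ℝ) (q - r) / q ≤ |(z / q : ℝ) - k| := by
    calc min (r : ℝ) (q - r) / q = |(z / q : ℝ) - round (z / q : ℝ)| := by
          rw [abs_sub_round_eq_min, Int.fract_div_intCast_eq_div_intCast_mod, ← hr,
            ← min_div_div_right hq'.le, sub_div, div_self hq'.ne']
      _ ≤ |(z / q : ℝ) - k| := round_le _ k
  have hmin : 1 ≤ min (r : ℝ) (q - r) := by
    refine le_min (by exact_mod_cast hr0) ?_
    rw [le_sub_iff_add_le']
    exact_mod_cast hrq
  have hη' : |η| ≤ min (r : ℝ) (q - r) / (4 * q) := hη.trans (by gcongr)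
  have htriangle : |(z / q : ℝ) - k| ≤ |z / q + η - k| + |η| := by
    rw [show (z / q : ℝ) - k = z / q + η - k - η by ring]
    exact abs_sub _ _
  have hhalf : min (r : ℝ) (q - r) / (2 * q) =
      min (r : ℝ) (q - r) / q - 2 * (min (r : ℝ) (q - r) / (4 * q)) := by ring
  have : 0 ≤ min (r : ℝ) (q - r) / (4 * q) := (abs_nonneg η).trans hη'
  linarith

lemma norm_sum_Icc_e_le_of_not_dvd {q : ℕ} {z : ℤ} (hq : 0 < q) (hz : ¬ (q : ℤ) ∣ z) {η : ℝ}
    (hη : |η| ≤ 1 / (4 * q)) (a b : ℤ) :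
    ‖∑ y ∈ Icc a b, e ((z / q + η) * y)‖ ≤ q / (z % q : ℤ) + q / (q - (z % q : ℤ)) := by
  have hr : (0 : ℝ) < (z % q : ℤ) := by
    have := Int.emod_nonneg z (by omega : (q : ℤ) ≠ 0)
    have := mt Int.dvd_of_emod_eq_zero hz
    exact_mod_cast (by omega : 0 < z % q)
  have hrq : (0 : ℝ) < q - (z % q : ℤ) := by
    rw [sub_pos]
    exact_mod_cast Int.emod_lt_of_pos z (by omega)
  set μ : ℝ := min ((z % q : ℤ) : ℝ) (q - (z % q : ℤ)) with hμ
  have hμ0 : 0 < μ := lt_min hr hrq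
  calc ‖∑ y ∈ Icc a b, e ((z / q + η) * y)‖
      ≤ 1 / (2 * (μ / (2 * q))) :=
        norm_sum_Icc_e_le (by positivity) (min_emod_div_le_abs_sub hq hz hη) a b
    _ = q / μ := by field_simp
    _ ≤ q / (z % q : ℤ) + q / (q - (z % q : ℤ)) := by
        rcases min_choice ((z % q : ℤ) : ℝ) (q - (z % q : ℤ)) with h | h <;> rw [hμ, h]
        · exact le_add_of_nonneg_right (by positivity)
        · exact le_add_of_nonneg_left (by positivity)

lemma abs_le_abs_add_intCast {η : ℝ} (hη : |η| ≤ 1 / 2) (m : ℤ) : |η| ≤ |η + m| := by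
  rcases eq_or_ne m 0 with rfl | hm
  · simp
  · have hm1 : (1 : ℝ) ≤ |(m : ℝ)| := by exact_mod_cast Int.one_le_abs hm
    have htriangle : |(m : ℝ)| ≤ |η + m| + |η| := by
      simpa using abs_sub (η + m) η
    linarith

lemma card_filter_mul_emod_eq_le {q : ℕ} (hq : 0 < q) {a : ℤ} (ha : IsCoprime a q) (L : ℕ)
    (r : ℤ) : (#{h ∈ Icc (-L : ℤ) L | h * a % q = r} : ℝ) ≤ 2 * L / q + 2 := by
  rcases ({h ∈ Icc (-L : ℤ) L | h * a % q = r}).eq_empty_or_nonempty with hempty | ⟨h₀, hh₀⟩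
  · rw [hempty]
    simp only [card_empty, Nat.cast_zero]
    positivity
  have hsub : {h ∈ Icc (-L : ℤ) L | h * a % q = r} ⊆
      {h ∈ Ioc (-L - 1 : ℤ) L | h ≡ h₀ [ZMOD q]} := by
    intro h hh
    simp only [mem_filter, mem_Icc, mem_Ioc] at hh hh₀ ⊢
    refine ⟨by omega, (Int.modEq_iff_dvd.2 ?_)⟩
    have hmod : h * a ≡ h₀ * a [ZMOD q] := hh.2.trans hh₀.2.symm
    refine ha.symm.dvd_of_dvd_mul_right ?_
    rw [sub_mul]
    exact hmod.dvd
  have hcount := Int.Ioc_filter_modEq_card (-L - 1) L (r := q) (by omega) h₀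
  set u : ℚ := ((L : ℤ) - h₀) / (q : ℤ) with hu
  set v : ℚ := ((-L - 1 : ℤ) - h₀) / (q : ℤ) with hv
  have hfloor : ((max (⌊u⌋ - ⌊v⌋) 0 : ℤ) : ℚ) ≤ 2 * L / q + 2 := by
    have hq'' : (1 : ℚ) ≤ q := by exact_mod_cast hq
    have huv : u - v = 2 * L / q + 1 / q := by
      rw [hu, hv]
      push_cast
      ring
    have hinv : 1 / (q : ℚ) ≤ 1 := (div_le_one (by positivity)).2 hq''
    push_cast
    refine max_le ?_ (by positivity)
    linarith [Int.floor_le u, Int.sub_one_lt_floor v]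
  have hcard : ((#{h ∈ Ioc (-L - 1 : ℤ) L | h ≡ h₀ [ZMOD q]} : ℚ) : ℝ) ≤
      ((2 * L / q + 2 : ℚ) : ℝ) := by
    rw [← hcount] at hfloor
    exact_mod_cast hfloor
  calc (#{h ∈ Icc (-L : ℤ) L | h * a % q = r} : ℝ)
      ≤ #{h ∈ Ioc (-L - 1 : ℤ) L | h ≡ h₀ [ZMOD q]} := by exact_mod_cast card_le_card hsub
    _ ≤ 2 * L / q + 2 := by simpa using hcard

lemma sum_div_add_div_sub_le (q : ℕ) :
    ∑ r ∈ Icc 1 (q - 1), ((q : ℝ) / r + q / (q - r)) ≤ 16 * q * (q : ℝ) ^ (1 / 8 : ℝ) := by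
  have hreflect : ∑ r ∈ Icc 1 (q - 1), (q : ℝ) / (q - r) = ∑ r ∈ Icc 1 (q - 1), (q : ℝ) / r := by
    refine sum_nbij' (fun r => q - r) (fun r => q - r) ?_ ?_ ?_ ?_ fun r hr => ?_
    all_goals simp only [mem_Icc] at *
    any_goals omega
    rw [Nat.cast_sub (by omega)]
  calc ∑ r ∈ Icc 1 (q - 1), ((q : ℝ) / r + q / (q - r))
      = 2 * q * ∑ r ∈ Icc 1 (q - 1), 1 / (r : ℝ) := by
        rw [sum_add_distrib, hreflect, ← two_mul, mul_assoc]
        simp only [mul_sum, mul_one_div]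
    _ ≤ 2 * q * (8 * (q : ℝ) ^ (1 / 8 : ℝ)) := by
        gcongr
        refine (sum_Icc_one_div_le _).trans ?_
        gcongr
        exact q.sub_le 1
    _ = 16 * q * (q : ℝ) ^ (1 / 8 : ℝ) := by ring

lemma card_mul_reciprocal_sum_le {N q : ℕ} (hq : 0 < q) (hqN : q ≤ 8 * N) :
    (4 * N / q + 2) * (16 * q * (q : ℝ) ^ (1 / 8 : ℝ)) ≤ 640 * (N : ℝ) ^ (9 / 8 : ℝ) := by
  have hqN' : (q : ℝ) ≤ 8 * N := by exact_mod_cast hqN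
  have hroot : (q : ℝ) ^ (1 / 8 : ℝ) ≤ 2 * (N : ℝ) ^ (1 / 8 : ℝ) := by
    calc (q : ℝ) ^ (1 / 8 : ℝ) ≤ (2 ^ (8 : ℝ) * N) ^ (1 / 8 : ℝ) := by
          gcongr
          norm_num
          linarith [N.cast_nonneg (α := ℝ)]
      _ = 2 * (N : ℝ) ^ (1 / 8 : ℝ) := by
          rw [Real.mul_rpow (by positivity) (by positivity), ← Real.rpow_mul (by norm_num)]
          norm_num
  calc (4 * N / q + 2) * (16 * q * (q : ℝ) ^ (1 / 8 : ℝ))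
      = (64 * N + 32 * q) * (q : ℝ) ^ (1 / 8 : ℝ) := by field_simp; ring
    _ ≤ (64 * N + 32 * (8 * N)) * (2 * (N : ℝ) ^ (1 / 8 : ℝ)) := by gcongr
    _ = 640 * (N : ℝ) ^ (9 / 8 : ℝ) := by
        rw [show (9 / 8 : ℝ) = 1 + 1 / 8 by norm_num,
          Real.rpow_one_add' (by positivity) (by norm_num)]
        ring

lemma toNat_mul_emod_mem_Icc {q : ℕ} (hq : 0 < q) {a h : ℤ} (ha : IsCoprime a q)
    (hh : ¬ (q : ℤ) ∣ h) : (h * a % q).toNat ∈ Icc 1 (q - 1) := by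
  have hlt := Int.emod_lt_of_pos (h * a) (by omega : (0 : ℤ) < q)
  have hnonneg := Int.emod_nonneg (h * a) (by omega : (q : ℤ) ≠ 0)
  have hne : h * a % q ≠ 0 := fun h0 =>
    hh (ha.symm.dvd_of_dvd_mul_right (Int.dvd_of_emod_eq_zero h0))
  rw [mem_Icc]
  omega

lemma sum_not_dvd_le {N q : ℕ} (hq : 0 < q) (hqN : q ≤ 8 * N) {a : ℤ} (ha : IsCoprime a q) :
    ∑ h ∈ Icc (-(2 * N : ℕ) : ℤ) (2 * N : ℕ) with ¬ (q : ℤ) ∣ h,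
      ((q : ℝ) / (h * a % q : ℤ) + q / (q - (h * a % q : ℤ))) ≤ 640 * (N : ℝ) ^ (9 / 8 : ℝ) := by
  let G : ℕ → ℝ := fun r => (q : ℝ) / r + q / (q - r)
  let S : Finset ℤ := {h ∈ Icc (-(2 * N : ℕ) : ℤ) (2 * N : ℕ) | ¬ (q : ℤ) ∣ h}
  have hemod (h : ℤ) : ((h * a % q).toNat : ℤ) = h * a % q :=
    Int.toNat_of_nonneg (Int.emod_nonneg _ (by omega))
  have hmaps : ∀ h ∈ S, (h * a % q).toNat ∈ Icc 1 (q - 1) := fun h hh =>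
    toNat_mul_emod_mem_Icc hq ha (mem_filter.1 hh).2
  have hcard (r : ℕ) : (#{h ∈ S | (h * a % q).toNat = r} : ℝ) ≤ 4 * N / q + 2 := by
    have hsub : {h ∈ S | (h * a % q).toNat = r} ⊆
        {h ∈ Icc (-(2 * N : ℕ) : ℤ) (2 * N : ℕ) | h * a % q = r} := by
      intro h hh
      have := hemod h
      simp only [S, mem_filter] at hh ⊢
      exact ⟨hh.1.1, by omega⟩
    refine (Nat.cast_le.2 (card_le_card hsub)).trans ?_
    refine (card_filter_mul_emod_eq_le hq ha (2 * N) r).trans_eq ?_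
    push_cast
    ring
  have hG : ∀ r ∈ Icc 1 (q - 1), 0 ≤ G r := by
    intro r hr
    have hrq : (r : ℝ) ≤ q := by exact_mod_cast (mem_Icc.1 hr).2.trans (q.sub_le 1)
    have : (0 : ℝ) ≤ q - r := sub_nonneg.2 hrq
    positivity
  calc ∑ h ∈ S, ((q : ℝ) / (h * a % q : ℤ) + q / (q - (h * a % q : ℤ)))
      = ∑ h ∈ S, G (h * a % q).toNat := by
        refine sum_congr rfl fun h _ => ?_
        have hcast : (((h * a % q).toNat : ℕ) : ℝ) = (h * a % q : ℤ) := by exact_mod_cast hemod h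
        simp only [G, hcast]
    _ ≤ (4 * N / q + 2) * ∑ r ∈ Icc 1 (q - 1), G r :=
        sum_comp_le_mul_sum hmaps (fun r _ => hcard r) hG
    _ ≤ (4 * N / q + 2) * (16 * q * (q : ℝ) ^ (1 / 8 : ℝ)) := by
        gcongr
        exact sum_div_add_div_sub_le q
    _ ≤ 640 * (N : ℝ) ^ (9 / 8 : ℝ) := card_mul_reciprocal_sum_le hq hqN

section Weyl

variable {N q : ℕ} {a h : ℤ} {θ : ℝ}

lemma abs_mul_approx_error_le (hN : 1 ≤ N) (hq : 0 < q) (hθ : |2 * θ - a / q| ≤ 1 / (8 * N * q))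
    (hh : h ∈ Icc (-(2 * N : ℕ) : ℤ) (2 * N : ℕ)) : |h * (2 * θ - a / q)| ≤ 1 / (4 * q) := by
  have hh' : |(h : ℝ)| ≤ 2 * N := by exact_mod_cast abs_le.2 (mem_Icc.1 hh)
  rw [abs_mul]
  calc |(h : ℝ)| * |2 * θ - a / q| ≤ 2 * N * (1 / (8 * N * q)) := by gcongr
    _ = 1 / (4 * q) := by field_simp; norm_num

lemma differencedSum_le_of_not_dvd (hN : 1 ≤ N) (hq : 0 < q) (ha : IsCoprime a q)
    (hθ : |2 * θ - a / q| ≤ 1 / (8 * N * q)) (hh : h ∈ Icc (-(2 * N : ℕ) : ℤ) (2 * N : ℕ))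
    (hdvd : ¬ (q : ℤ) ∣ h) :
    differencedSum N θ h ≤ q / (h * a % q : ℤ) + q / (q - (h * a % q : ℤ)) := by
  have harg : (h * (2 * θ) : ℝ) = (h * a : ℤ) / q + h * (2 * θ - a / q) := by
    push_cast
    ring
  rw [differencedSum, harg]
  exact norm_sum_Icc_e_le_of_not_dvd hq (mt ha.symm.dvd_of_dvd_mul_right hdvd)
    (abs_mul_approx_error_le hN hq hθ hh) _ _

lemma differencedSum_mul_abs_le_of_dvd (hN : 1 ≤ N) (hq : 0 < q)
    (hθ : |2 * θ - a / q| ≤ 1 / (8 * N * q)) (hh : h ∈ Icc (-(2 * N : ℕ) : ℤ) (2 * N : ℕ))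
    (hdvd : (q : ℤ) ∣ h) : differencedSum N θ h * |h * (2 * θ - a / q)| ≤ 1 / 2 := by
  set η : ℝ := h * (2 * θ - a / q) with hη
  have hη2 : |η| ≤ 1 / 2 := by
    refine (abs_mul_approx_error_le hN hq hθ hh).trans ?_
    have hq' : (1 : ℝ) ≤ q := by exact_mod_cast hq
    gcongr
    linarith
  rcases eq_or_ne η 0 with h0 | h0
  · simp [h0]
  obtain ⟨c, rfl⟩ := hdvd
  have harg : ((q * c : ℤ) * (2 * θ) : ℝ) = η + (c * a : ℤ) := by
    rw [hη]
    push_cast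
    field_simp
    ring
  have hdist (k : ℤ) : |η| ≤ |((q * c : ℤ) * (2 * θ) : ℝ) - k| := by
    rw [harg, add_sub_assoc, ← Int.cast_sub]
    exact abs_le_abs_add_intCast hη2 _
  have hη0 := abs_pos.2 h0
  calc differencedSum N θ (q * c) * |η| ≤ 1 / (2 * |η|) * |η| := by
        gcongr
        exact norm_sum_Icc_e_le hη0 hdist _ _
    _ = 1 / 2 := by field_simp

lemma le_mul_rpow_neg_of_mul_one_add_le {g B t X s : ℝ} (hg : 0 ≤ g) (ht0 : 0 < t) (ht1 : t ≤ 1)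
    (hX : 0 ≤ X) (hs0 : 0 ≤ s) (hs1 : s ≤ 1) (h : g * (1 + t * X) ≤ B) :
    g ≤ B * (t * (1 + X)) ^ (-s) := by
  have hpow : (t * (1 + X)) ^ s ≤ 1 + t * X := by
    calc (t * (1 + X)) ^ s ≤ (1 + t * X) ^ s := by
          gcongr
          linarith
      _ ≤ 1 + t * X := Real.rpow_le_self_of_one_le (by nlinarith) hs1
  rw [Real.rpow_neg (by positivity), ← div_eq_mul_inv, le_div_iff₀ (by positivity)]
  exact (mul_le_mul_of_nonneg_left hpow hg).trans h

lemma differencedSum_le_of_dvd (hN : 1 ≤ N) (hq : 0 < q)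
    (hθ : |2 * θ - a / q| ≤ 1 / (8 * N * q)) (hh : h ∈ Icc (-(2 * N : ℕ) : ℤ) (2 * N : ℕ))
    (hdvd : (q : ℤ) ∣ h) (h0 : h ≠ 0) :
    differencedSum N θ h ≤
      6 * N * (h.natAbs / (2 * N) * (1 + N ^ 2 * |2 * θ - a / q|)) ^ (-(7 / 8) : ℝ) := by
  have hN' : (0 : ℝ) < N := by exact_mod_cast hN
  have hh2 : (h.natAbs : ℝ) ≤ 2 * N := by
    have := mem_Icc.1 hh
    exact_mod_cast (by omega : h.natAbs ≤ 2 * N)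
  have habs : |(h : ℝ)| = h.natAbs := by rw [Nat.cast_natAbs, Int.cast_abs]
  have hprod := differencedSum_mul_abs_le_of_dvd hN hq hθ hh hdvd
  rw [abs_mul, habs] at hprod
  refine le_mul_rpow_neg_of_mul_one_add_le (differencedSum_nonneg N θ h) (by positivity)
    ((div_le_one (by positivity)).2 hh2) (by positivity) (by norm_num) (by norm_num) ?_
  calc differencedSum N θ h * (1 + h.natAbs / (2 * N) * (N ^ 2 * |2 * θ - a / q|))
      = differencedSum N θ h + N / 2 *
          (differencedSum N θ h * (h.natAbs * |2 * θ - a / q|)) := by field_simp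
    _ ≤ 3 * N + N / 2 * (1 / 2) := by
        gcongr
        exact differencedSum_le hN θ h
    _ ≤ 6 * N := by linarith

lemma sum_dvd_le (hN : 1 ≤ N) (hq : 0 < q) (hθ : |2 * θ - a / q| ≤ 1 / (8 * N * q)) :
    ∑ h ∈ Icc (-(2 * N : ℕ) : ℤ) (2 * N : ℕ) with (q : ℤ) ∣ h ∧ h ≠ 0, differencedSum N θ h ≤
      192 * (N ^ 2 / q * (1 + N ^ 2 * |2 * θ - a / q|) ^ (-(7 / 8) : ℝ)) := by
  set X : ℝ := N ^ 2 * |2 * θ - a / q|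
  let T : ℕ → ℝ := fun m => 6 * N * (m / (2 * N) * (1 + X)) ^ (-(7 / 8) : ℝ)
  have hT (j : ℕ) : T (q * j) =
      6 * N * ((2 * N / q : ℝ) ^ (7 / 8 : ℝ) * (1 + X) ^ (-(7 / 8) : ℝ)) *
        (j : ℝ) ^ (1 / 8 - 1 : ℝ) := by
    have hsplit : ((q * j : ℕ) / (2 * N) * (1 + X) : ℝ) = (2 * N / q : ℝ)⁻¹ * (1 + X) * j := by
      push_cast
      field_simp
    have hX0 : 0 ≤ 1 + X := by positivity
    simp only [T]
    rw [hsplit, Real.mul_rpow (by positivity) (by positivity),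
      Real.mul_rpow (by positivity) hX0, Real.inv_rpow (by positivity),
      Real.rpow_neg (by positivity) (7 / 8), inv_inv, mul_assoc]
    norm_num
    ring
  calc ∑ h ∈ Icc (-(2 * N : ℕ) : ℤ) (2 * N : ℕ) with (q : ℤ) ∣ h ∧ h ≠ 0, differencedSum N θ h
      ≤ ∑ h ∈ Icc (-(2 * N : ℕ) : ℤ) (2 * N : ℕ) with (q : ℤ) ∣ h ∧ h ≠ 0, T h.natAbs := by
        refine sum_le_sum fun h hh => ?_
        obtain ⟨hI, hdvd, h0⟩ := mem_filter.1 hh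
        exact differencedSum_le_of_dvd hN hq hθ hI hdvd h0
    _ ≤ 2 * ∑ j ∈ Icc 1 (2 * N / q), T (q * j) :=
        sum_multiples_natAbs_le _ hq fun _ => by positivity
    _ ≤ 2 * (6 * N * ((2 * N / q : ℝ) ^ (7 / 8 : ℝ) * (1 + X) ^ (-(7 / 8) : ℝ)) *
          ((2 * N / q : ℝ) ^ (1 / 8 : ℝ) / (1 / 8))) := by
        simp only [hT, ← mul_sum]
        gcongr
        refine (sum_Icc_rpow_sub_one_le (by norm_num) (by norm_num) _).trans ?_
        gcongr
        exact_mod_cast Nat.cast_div_le (α := ℝ) (m := 2 * N) (n := q)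
    _ = 96 * N * ((2 * N / q : ℝ) ^ (7 / 8 + 1 / 8 : ℝ) * (1 + X) ^ (-(7 / 8) : ℝ)) := by
        rw [Real.rpow_add (by positivity)]
        ring
    _ = 192 * (N ^ 2 / q * (1 + X) ^ (-(7 / 8) : ℝ)) := by
        norm_num
        ring

lemma sum_eq_zero_add_dvd_add_not_dvd (g : ℤ → ℝ) (L q : ℕ) :
    ∑ h ∈ Icc (-L : ℤ) L, g h = g 0 + ∑ h ∈ Icc (-L : ℤ) L with (q : ℤ) ∣ h ∧ h ≠ 0, g h +
      ∑ h ∈ Icc (-L : ℤ) L with ¬ (q : ℤ) ∣ h, g h := by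
  have hzero : (0 : ℤ) ∈ {h ∈ Icc (-L : ℤ) L | (q : ℤ) ∣ h} := by simp
  rw [← sum_filter_add_sum_filter_not _ fun h => (q : ℤ) ∣ h, ← add_sum_erase _ _ hzero,
    ← filter_filter, filter_ne']

theorem exists_norm_weylSum_sq_le (hN : 1 ≤ N) (θ : ℝ) :
    ∃ (a : ℤ) (q : ℕ), 0 < q ∧ ‖weylSum N θ‖ ^ 2 ≤ 643 * ((N : ℝ) ^ (9 / 8 : ℝ) +
      N ^ 2 / q * (1 + N ^ 2 * |2 * θ - a / q|) ^ (-(7 / 8) : ℝ)) := by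
  obtain ⟨p, hp, hden⟩ := Real.exists_rat_abs_sub_le_and_den_le (2 * θ) (n := 8 * N) (by omega)
  refine ⟨p.num, p.den, p.pos, ?_⟩
  have hN' : (1 : ℝ) ≤ N := by exact_mod_cast hN
  have hθ : |2 * θ - p.num / p.den| ≤ 1 / (8 * N * p.den) := by
    rw [← Rat.cast_def]
    refine hp.trans ?_
    have := p.pos
    push_cast
    gcongr
    linarith
  have hzero := differencedSum_le hN θ 0
  have hNpow : (N : ℝ) ≤ (N : ℝ) ^ (9 / 8 : ℝ) := Real.self_le_rpow_of_one_le hN' (by norm_num)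
  have hmajor := sum_dvd_le hN p.pos hθ
  have hminor : ∑ h ∈ Icc (-(2 * N : ℕ) : ℤ) (2 * N : ℕ) with ¬ (p.den : ℤ) ∣ h,
      differencedSum N θ h ≤ 640 * (N : ℝ) ^ (9 / 8 : ℝ) := by
    have hcoprime : IsCoprime p.num p.den := p.isCoprime_num_den
    refine (sum_le_sum fun h hh => ?_).trans (sum_not_dvd_le p.pos hden hcoprime)
    exact differencedSum_le_of_not_dvd hN p.pos hcoprime hθ (mem_filter.1 hh).1 (mem_filter.1 hh).2
  have hpos : 0 ≤ N ^ 2 / p.den * (1 + N ^ 2 * |2 * θ - p.num / p.den|) ^ (-(7 / 8) : ℝ) := by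
    positivity
  have hsplit := norm_weylSum_sq_le_sum_differencedSum N θ
  rw [sum_eq_zero_add_dvd_add_not_dvd _ _ p.den] at hsplit
  linarith

end Weyl

/-! ### Divisor sums -/

section Divisors

variable {s ε : ℝ}

lemma natCast_add_one_le_mul_pow_rpow (hε : 0 < ε) {p : ℝ} (hp : 2 ≤ p) (a : ℕ) :
    (a + 1 : ℝ) ≤ (1 + 2 / ε) * (p ^ a) ^ ε := by
  have hexp : (1 + a * ε / 2 : ℝ) ≤ (p ^ a) ^ ε := calc
    (1 + a * ε / 2 : ℝ) ≤ Real.log 2 * (a * ε) + 1 := by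
        have hlog := Real.log_two_gt_d9
        have hnonneg : 0 ≤ a * ε := by positivity
        nlinarith
    _ ≤ Real.exp (Real.log 2 * (a * ε)) := Real.add_one_le_exp _
    _ = ((2 : ℝ) ^ a) ^ ε := by
        rw [← Real.rpow_natCast, ← Real.rpow_mul zero_le_two, Real.rpow_def_of_pos zero_lt_two]
    _ ≤ (p ^ a) ^ ε := by gcongr
  calc (a + 1 : ℝ) ≤ a + 1 + (2 / ε + a * ε / 2) := le_add_of_nonneg_right (by positivity)
    _ = (1 + 2 / ε) * (1 + a * ε / 2) := by
        field_simp
        ring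
    _ ≤ (1 + 2 / ε) * (p ^ a) ^ ε := by gcongr

lemma natCast_add_one_le_pow_rpow {p : ℝ} (hp : 0 ≤ p) (hpε : 2 ≤ p ^ ε) (a : ℕ) :
    (a + 1 : ℝ) ≤ (p ^ a) ^ ε := calc
  (a + 1 : ℝ) ≤ 2 ^ a := by exact_mod_cast a.lt_two_pow_self
  _ ≤ (p ^ ε) ^ a := by gcongr
  _ = (p ^ a) ^ ε := Real.rpow_pow_comm hp ε a

lemma exists_card_divisors_le (hε : 0 < ε) :
    ∃ C : ℝ, 1 ≤ C ∧ ∀ m : ℕ, m ≠ 0 → (#m.divisors : ℝ) ≤ C * (m : ℝ) ^ ε := by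
  set P : ℕ := ⌈(2 : ℝ) ^ (1 / ε)⌉₊
  set A : ℝ := 1 + 2 / ε
  have hA : 1 ≤ A := le_add_of_nonneg_right (by positivity)
  refine ⟨A ^ P, one_le_pow₀ hA, fun m hm => ?_⟩
  have hlocal : ∀ p ∈ m.primeFactors, (m.factorization p + 1 : ℝ) ≤
      (if p < P then A else 1) * ((p : ℝ) ^ m.factorization p) ^ ε := by
    intro p hp
    split_ifs with hpP
    · have hp2 : (2 : ℝ) ≤ p := by exact_mod_cast (Nat.prime_of_mem_primeFactors hp).two_le
      exact natCast_add_one_le_mul_pow_rpow hε hp2 _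
    · have hpε : (2 : ℝ) ≤ (p : ℝ) ^ ε := by
        rw [← Real.rpow_inv_le_iff_of_pos zero_le_two p.cast_nonneg hε, ← one_div]
        exact Nat.ceil_le.1 (not_lt.1 hpP)
      rw [one_mul]
      exact natCast_add_one_le_pow_rpow p.cast_nonneg hpε _
  have hsmall : ∏ p ∈ m.primeFactors, (if p < P then A else 1) ≤ A ^ P := by
    rw [prod_ite, prod_const_one, mul_one, prod_const]
    refine pow_le_pow_right₀ hA ?_
    simpa using card_le_card fun p hp => mem_range.2 (mem_filter.1 hp).2
  have hm_prod : ∏ p ∈ m.primeFactors, ((p : ℝ) ^ m.factorization p) ^ ε = (m : ℝ) ^ ε := by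
    rw [Real.finsetProd_rpow _ _ fun p _ => by positivity]
    exact_mod_cast congrArg (fun k : ℕ => (k : ℝ) ^ ε) (Nat.prod_factorization_pow_eq_self hm)
  calc (#m.divisors : ℝ) = ∏ p ∈ m.primeFactors, (m.factorization p + 1 : ℝ) := by
        rw [Nat.card_divisors hm]
        push_cast
        rfl
    _ ≤ ∏ p ∈ m.primeFactors,
          (if p < P then A else 1) * ((p : ℝ) ^ m.factorization p) ^ ε :=
        prod_le_prod (fun _ _ => by positivity) hlocal
    _ = (∏ p ∈ m.primeFactors, (if p < P then A else 1)) * (m : ℝ) ^ ε := by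
        rw [prod_mul_distrib, hm_prod]
    _ ≤ A ^ P * (m : ℝ) ^ ε := by gcongr

/-- The divisor function `σ₋ₛ`, for a real exponent `s`. -/
def sigmaNeg (s : ℝ) (k : ℕ) : ℝ := ∑ q ∈ k.divisors, (q : ℝ) ^ (-s)

lemma sigmaNeg_nonneg (s : ℝ) (k : ℕ) : 0 ≤ sigmaNeg s k := sum_nonneg fun _ _ => by positivity

lemma card_lcm_eq_le (k m : ℕ) (hm : m ≠ 0) :
    #{p ∈ k.divisors ×ˢ k.divisors | p.1.lcm p.2 = m} ≤ #m.divisors ^ 2 := by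
  rw [sq, ← card_product]
  refine card_le_card fun p hp => ?_
  obtain ⟨-, rfl⟩ := mem_filter.1 hp
  simp only [mem_product, Nat.mem_divisors]
  exact ⟨⟨Nat.dvd_lcm_left _ _, hm⟩, Nat.dvd_lcm_right _ _, hm⟩

lemma sum_lcm_eq_rpow_neg_le (hs : 0 ≤ s) (k m : ℕ) (hm : m ≠ 0) :
    ∑ p ∈ k.divisors ×ˢ k.divisors with p.1.lcm p.2 = m, (p.1 : ℝ) ^ (-s) * (p.2 : ℝ) ^ (-s) ≤
      (#m.divisors : ℝ) ^ 2 * (m : ℝ) ^ (-s) := by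
  have hterm : ∀ p ∈ {p ∈ k.divisors ×ˢ k.divisors | p.1.lcm p.2 = m},
      (p.1 : ℝ) ^ (-s) * (p.2 : ℝ) ^ (-s) ≤ (m : ℝ) ^ (-s) := by
    intro p hp
    obtain ⟨hmem, rfl⟩ := mem_filter.1 hp
    have hpos : 0 < p.1 * p.2 := Nat.mul_pos (Nat.pos_of_mem_divisors (mem_product.1 hmem).1)
      (Nat.pos_of_mem_divisors (mem_product.1 hmem).2)
    rw [← Real.mul_rpow (by positivity) (by positivity)]
    refine Real.rpow_le_rpow_of_nonpos (by positivity) ?_ (by linarith)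
    exact_mod_cast Nat.le_of_dvd hpos (Nat.lcm_dvd_mul _ _)
  refine (sum_le_card_nsmul _ _ _ hterm).trans ?_
  rw [nsmul_eq_mul]
  gcongr
  exact_mod_cast card_lcm_eq_le k m hm

lemma exists_sigmaNeg_sq_le (hs : 0 < s) : ∃ C : ℝ, 1 ≤ C ∧ ∀ k : ℕ,
    sigmaNeg s k ^ 2 ≤ C * sigmaNeg (s / 2) k := by
  obtain ⟨C, hC, hcard⟩ := exists_card_divisors_le (show 0 < s / 4 by positivity)
  refine ⟨C ^ 2, one_le_pow₀ hC, fun k => ?_⟩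
  have hmaps : ∀ p ∈ k.divisors ×ˢ k.divisors, p.1.lcm p.2 ∈ k.divisors := by
    intro p hp
    simp only [mem_product, Nat.mem_divisors] at hp ⊢
    exact ⟨Nat.lcm_dvd hp.1.1 hp.2.1, hp.1.2⟩
  rw [sigmaNeg, sq, sum_mul_sum, ← sum_product', ← sum_fiberwise_of_maps_to hmaps, sigmaNeg,
    mul_sum]
  refine sum_le_sum fun m hm => ?_
  have hm0 : m ≠ 0 := (Nat.pos_of_mem_divisors hm).ne'
  calc ∑ p ∈ k.divisors ×ˢ k.divisors with p.1.lcm p.2 = m, (p.1 : ℝ) ^ (-s) * (p.2 : ℝ) ^ (-s)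
      ≤ (#m.divisors : ℝ) ^ 2 * (m : ℝ) ^ (-s) := sum_lcm_eq_rpow_neg_le hs.le k m hm0
    _ ≤ (C * (m : ℝ) ^ (s / 4)) ^ 2 * (m : ℝ) ^ (-s) := by
        gcongr
        exact hcard m hm0
    _ = C ^ 2 * (m : ℝ) ^ (-(s / 2)) := by
        rw [mul_pow, mul_assoc, ← Real.rpow_mul_natCast (by positivity),
          ← Real.rpow_add (by positivity)]
        congr 2
        push_cast
        ring

lemma exists_sigmaNeg_pow_two_pow_le (hs : 0 < s) (j : ℕ) : ∃ C : ℝ, 1 ≤ C ∧ ∀ k : ℕ,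
    sigmaNeg s k ^ 2 ^ j ≤ C * sigmaNeg (s / 2 ^ j) k := by
  induction j with
  | zero => exact ⟨1, le_rfl, fun k => by simp⟩
  | succ j ih =>
    obtain ⟨C, hC, hpow⟩ := ih
    obtain ⟨D, hD, hsq⟩ := exists_sigmaNeg_sq_le (show 0 < s / 2 ^ j by positivity)
    refine ⟨C ^ 2 * D, one_le_mul_of_one_le_of_one_le (one_le_pow₀ hC) hD, fun k => ?_⟩
    calc sigmaNeg s k ^ 2 ^ (j + 1) = (sigmaNeg s k ^ 2 ^ j) ^ 2 := by rw [pow_succ, pow_mul]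
      _ ≤ (C * sigmaNeg (s / 2 ^ j) k) ^ 2 := by
          have := sigmaNeg_nonneg s k
          gcongr
          exact hpow k
      _ = C ^ 2 * sigmaNeg (s / 2 ^ j) k ^ 2 := mul_pow _ _ _
      _ ≤ C ^ 2 * (D * sigmaNeg (s / 2 ^ j / 2) k) := by
          gcongr
          exact hsq k
      _ = C ^ 2 * D * sigmaNeg (s / 2 ^ (j + 1)) k := by
          rw [div_div, ← pow_succ]
          ring

lemma sum_Icc_sigmaNeg_eq (s : ℝ) (H : ℕ) :
    ∑ k ∈ Icc 1 H, sigmaNeg s k = ∑ q ∈ Icc 1 H, (H / q : ℕ) * (q : ℝ) ^ (-s) := by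
  have hcount (q : ℕ) : ((H / q : ℕ) : ℝ) * (q : ℝ) ^ (-s) =
      ∑ k ∈ Ioc 0 H with q ∣ k, (q : ℝ) ^ (-s) := by
    rw [sum_const, nsmul_eq_mul, Nat.Ioc_filter_dvd_card_eq_div]
  simp only [hcount]
  refine sum_comm' fun k q => ?_
  simp only [mem_Icc, Nat.mem_divisors, mem_filter, mem_Ioc]
  constructor
  · rintro ⟨⟨hk, hkH⟩, hqk, -⟩
    exact ⟨⟨⟨hk, hkH⟩, hqk⟩, Nat.pos_of_dvd_of_pos hqk hk, (Nat.le_of_dvd hk hqk).trans hkH⟩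
  · rintro ⟨⟨hk, hqk⟩, -⟩
    exact ⟨hk, hqk, hk.1.ne'⟩

lemma exists_sum_Icc_sigmaNeg_le (hs : 0 < s) : ∃ C : ℝ, 0 ≤ C ∧ ∀ H : ℕ,
    ∑ k ∈ Icc 1 H, sigmaNeg s k ≤ C * H := by
  have hsummable : Summable fun q : ℕ => (q : ℝ) ^ (-(1 + s)) :=
    Real.summable_nat_rpow.2 (by linarith)
  refine ⟨∑' q : ℕ, (q : ℝ) ^ (-(1 + s)), tsum_nonneg fun _ => by positivity, fun H => ?_⟩
  calc ∑ k ∈ Icc 1 H, sigmaNeg s k = ∑ q ∈ Icc 1 H, (H / q : ℕ) * (q : ℝ) ^ (-s) :=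
        sum_Icc_sigmaNeg_eq s H
    _ ≤ ∑ q ∈ Icc 1 H, (q : ℝ) ^ (-(1 + s)) * H := by
        refine sum_le_sum fun q hq => ?_
        have hq0 : (0 : ℝ) < q := by exact_mod_cast (mem_Icc.1 hq).1
        calc ((H / q : ℕ) : ℝ) * (q : ℝ) ^ (-s) ≤ H / q * (q : ℝ) ^ (-s) := by
              gcongr
              exact Nat.cast_div_le
          _ = (q : ℝ) ^ (-(1 + s)) * H := by
              rw [neg_add, Real.rpow_add hq0, Real.rpow_neg_one]
              ring
    _ ≤ (∑' q : ℕ, (q : ℝ) ^ (-(1 + s))) * H := by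
        rw [← sum_mul]
        gcongr
        exact hsummable.sum_le_tsum _ fun _ _ => by positivity

/-- The truncation to `q ≤ Q` of the divisor function `σ₋ₛ`, which unlike `sigmaNeg` makes sense
at `m = 0`. -/
def divisorWeight (s : ℝ) (Q : ℕ) (m : ℤ) : ℝ :=
  ∑ q ∈ Icc 1 Q with ((q : ℕ) : ℤ) ∣ m, (q : ℝ) ^ (-s)

lemma divisorWeight_nonneg (s : ℝ) (Q : ℕ) (m : ℤ) : 0 ≤ divisorWeight s Q m :=
  sum_nonneg fun _ _ => by positivity

lemma divisorWeight_le (hs : 0 ≤ s) (Q : ℕ) (m : ℤ) : divisorWeight s Q m ≤ Q := by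
  have hterm : ∀ q ∈ {q ∈ Icc 1 Q | ((q : ℕ) : ℤ) ∣ m}, (q : ℝ) ^ (-s) ≤ 1 := fun q hq =>
    Real.rpow_le_one_of_one_le_of_nonpos
      (by exact_mod_cast (mem_Icc.1 (mem_filter.1 hq).1).1) (by linarith)
  refine (sum_le_card_nsmul _ _ _ hterm).trans ?_
  rw [nsmul_one]
  exact_mod_cast (card_filter_le _ _).trans (by simp)

lemma divisorWeight_le_sigmaNeg (s : ℝ) (Q : ℕ) {m : ℤ} (hm : m ≠ 0) :
    divisorWeight s Q m ≤ sigmaNeg s m.natAbs := by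
  refine sum_le_sum_of_subset_of_nonneg (fun q hq => ?_) fun _ _ _ => by positivity
  rw [Nat.mem_divisors]
  exact ⟨Int.natCast_dvd.1 (mem_filter.1 hq).2, Int.natAbs_ne_zero.2 hm⟩

lemma sum_range_erase_natAbs_sub_le {H l : ℕ} (hl : l < H) {T : ℕ → ℝ} (hT : ∀ j, 0 ≤ T j) :
    ∑ k ∈ (range H).erase l, T ((k : ℤ) - l).natAbs ≤ 2 * ∑ j ∈ Icc 1 H, T j := by
  have hinj : Set.InjOn (fun k : ℕ => (k : ℤ) - l) ((range H).erase l) := fun a _ b _ hab => by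
    simp only at hab
    omega
  calc ∑ k ∈ (range H).erase l, T ((k : ℤ) - l).natAbs
      = ∑ h ∈ ((range H).erase l).image fun k : ℕ => (k : ℤ) - l, T h.natAbs :=
        (sum_image (f := fun h : ℤ => T h.natAbs) hinj).symm
    _ ≤ ∑ h ∈ Icc (-H : ℤ) H with ((1 : ℕ) : ℤ) ∣ h ∧ h ≠ 0, T h.natAbs := by
        refine sum_le_sum_of_subset_of_nonneg (fun h hh => ?_) fun h _ _ => hT _
        obtain ⟨k, hk, rfl⟩ := mem_image.1 hh
        simp only [mem_erase, mem_range] at hk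
        simp only [mem_filter, mem_Icc, Nat.cast_one, one_dvd, true_and]
        omega
    _ ≤ 2 * ∑ j ∈ Icc 1 H, T j := by simpa using sum_multiples_natAbs_le H one_pos hT

lemma exists_sum_divisorWeight_pow_two_pow_le (hs : 0 < s) (j : ℕ) : ∃ C : ℝ, 1 ≤ C ∧
    ∀ Q H l : ℕ, Q ^ 2 ^ j ≤ 2 * H → l < H →
      ∑ k ∈ range H, divisorWeight s Q (k - l) ^ 2 ^ j ≤ C * H := by
  obtain ⟨C, hC, hpow⟩ := exists_sigmaNeg_pow_two_pow_le hs j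
  obtain ⟨D, hD, hmean⟩ := exists_sum_Icc_sigmaNeg_le (show 0 < s / 2 ^ j by positivity)
  refine ⟨2 + 2 * (C * D), by nlinarith, fun Q H l hQ hl => ?_⟩
  have hdiag : divisorWeight s Q ((l : ℤ) - l) ^ 2 ^ j ≤ 2 * (H : ℝ) := calc
    divisorWeight s Q ((l : ℤ) - l) ^ 2 ^ j ≤ (Q : ℝ) ^ 2 ^ j :=
        pow_le_pow_left₀ (divisorWeight_nonneg _ _ _) (divisorWeight_le hs.le _ _) _
    _ ≤ 2 * H := by exact_mod_cast hQ
  have hoff : ∑ k ∈ (range H).erase l, divisorWeight s Q ((k : ℤ) - l) ^ 2 ^ j ≤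
      2 * (C * (D * H)) := calc
    ∑ k ∈ (range H).erase l, divisorWeight s Q ((k : ℤ) - l) ^ 2 ^ j
        ≤ ∑ k ∈ (range H).erase l, sigmaNeg s ((k : ℤ) - l).natAbs ^ 2 ^ j :=
        sum_le_sum fun k hk => pow_le_pow_left₀ (divisorWeight_nonneg _ _ _)
          (divisorWeight_le_sigmaNeg s Q (by have := ne_of_mem_erase hk; omega)) _
    _ ≤ 2 * ∑ k ∈ Icc 1 H, sigmaNeg s k ^ 2 ^ j :=
        sum_range_erase_natAbs_sub_le hl (T := fun k => sigmaNeg s k ^ 2 ^ j)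
          fun k => pow_nonneg (sigmaNeg_nonneg s k) _
    _ ≤ 2 * ∑ k ∈ Icc 1 H, C * sigmaNeg (s / 2 ^ j) k := by
        gcongr with k
        exact hpow k
    _ ≤ 2 * (C * (D * H)) := by
        rw [← mul_sum]
        gcongr
        exact hmean H
  rw [← add_sum_erase _ _ (mem_range.2 hl)]
  linarith

end Divisors

/-! ### Fejér kernels on major arcs -/

section Fejer

variable {s : ℝ} {H : ℕ} {t : ℝ}

/-- The Fejér kernel, normalised to take the value `1` at the integers. -/
def fejer (H : ℕ) (t : ℝ) : ℝ := ‖∑ k ∈ range H, e (k * t)‖ ^ 2 / H ^ 2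

lemma fejer_nonneg (H : ℕ) (t : ℝ) : 0 ≤ fejer H t := by
  unfold fejer
  positivity

lemma fejer_add_intCast (H : ℕ) (t : ℝ) (b : ℤ) : fejer H (t + b) = fejer H t := by
  have hterm (k : ℕ) : e (k * (t + b)) = e (k * t) := by
    rw [← e_add_intCast (k * t) (k * b)]
    push_cast
    ring_nf
  simp only [fejer, hterm]

lemma half_le_re_e (ht : 8 * |t| ≤ 1) : 1 / 2 ≤ (e t).re := by
  have hre : (e t).re = Real.cos (2 * Real.pi * t) := by
    rw [e, Real.fourierChar_apply, Complex.exp_ofReal_mul_I_re]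
  have habs : |2 * Real.pi * t| ≤ 1 := by
    rw [abs_mul, abs_of_pos Real.two_pi_pos]
    nlinarith [Real.pi_lt_four, abs_nonneg t]
  have hsq : (2 * Real.pi * t) ^ 2 ≤ 1 := (sq_le_one_iff_abs_le_one _).2 habs
  linarith [Real.one_sub_sq_div_two_le_cos (x := 2 * Real.pi * t)]

lemma one_le_four_mul_fejer (hH : 0 < H) (ht : 8 * H * |t| ≤ 1) : 1 ≤ 4 * fejer H t := by
  have hre : ∀ k ∈ range H, 1 / 2 ≤ (e (k * t)).re := by
    intro k hk
    refine half_le_re_e (le_trans ?_ ht)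
    have hkH : (k : ℝ) ≤ H := by exact_mod_cast (mem_range.1 hk).le
    rw [abs_mul, Nat.abs_cast, ← mul_assoc]
    gcongr
  have hnorm : (H / 2 : ℝ) ≤ ‖∑ k ∈ range H, e (k * t)‖ := calc
    (H / 2 : ℝ) = ∑ k ∈ range H, (1 / 2 : ℝ) := by
        rw [sum_const, card_range, nsmul_eq_mul]
        ring
    _ ≤ (∑ k ∈ range H, e (k * t)).re := by
        rw [Complex.re_sum]
        exact sum_le_sum hre
    _ ≤ ‖∑ k ∈ range H, e (k * t)‖ := Complex.re_le_norm _
  rw [fejer, ← mul_div_assoc, one_le_div (by positivity)]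
  nlinarith [pow_le_pow_left₀ (by positivity) hnorm 2]

lemma ofReal_fejer_eq (H : ℕ) (t : ℝ) :
    (fejer H t : ℂ) = (∑ p ∈ range H ×ˢ range H, e ((p.1 - p.2 : ℤ) * t)) / H ^ 2 := by
  rw [fejer, Complex.ofReal_div, norm_sum_sq_eq, ← sum_product']
  push_cast
  congr 1
  refine sum_congr rfl fun p _ => ?_
  rw [conj_e, ← e_add]
  ring_nf

/-- A superposition of Fejér kernels concentrated at the rationals `a / q` with `q ≤ Q`, the weights
being chosen so that its `m`-th Fourier coefficient is `divisorWeight s Q m` times that of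
`fejer H`. -/
def arcKernel (s : ℝ) (Q H : ℕ) (t : ℝ) : ℝ :=
  ∑ q ∈ Icc 1 Q, (q : ℝ) ^ (-(1 + s)) * ∑ a ∈ range q, fejer H (t - a / q)

lemma arcKernel_nonneg (s : ℝ) (Q H : ℕ) (t : ℝ) : 0 ≤ arcKernel s Q H t :=
  sum_nonneg fun q _ => mul_nonneg (by positivity) (sum_nonneg fun a _ => fejer_nonneg _ _)

lemma rpow_neg_le_four_mul_arcKernel (s : ℝ) {Q q : ℕ} (hH : 0 < H) (hq : 0 < q) (hqQ : q ≤ Q)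
    {a : ℤ} (ht : 8 * H * |t - a / q| ≤ 1) : (q : ℝ) ^ (-(1 + s)) ≤ 4 * arcKernel s Q H t := by
  obtain ⟨b, hb⟩ : ∃ b : ℕ, (b : ℤ) = a % q :=
    Int.eq_ofNat_of_zero_le (Int.emod_nonneg _ (by omega)) |>.imp fun _ => Eq.symm
  have hbq : b ∈ range q := mem_range.2 (by have := Int.emod_lt_of_pos a (b := q); omega)
  have hshift : t - b / q = t - a / q + (a / (q : ℤ) : ℤ) := by
    have hdiv : (a : ℝ) = q * (a / (q : ℤ) : ℤ) + b := by
      exact_mod_cast (hb ▸ Int.mul_ediv_add_emod a q).symm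
    rw [hdiv]
    field_simp
    ring
  have hfejer : 1 ≤ 4 * fejer H (t - b / q) := by
    rw [hshift, fejer_add_intCast]
    exact one_le_four_mul_fejer hH ht
  calc (q : ℝ) ^ (-(1 + s)) ≤ (q : ℝ) ^ (-(1 + s)) * (4 * fejer H (t - b / q)) :=
        le_mul_of_one_le_right (by positivity) hfejer
    _ = 4 * ((q : ℝ) ^ (-(1 + s)) * fejer H (t - b / q)) := by ring
    _ ≤ 4 * ((q : ℝ) ^ (-(1 + s)) * ∑ a ∈ range q, fejer H (t - a / q)) := by
        gcongr
        exact single_le_sum (f := fun a : ℕ => fejer H (t - a / q))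
          (fun _ _ => fejer_nonneg _ _) hbq
    _ ≤ 4 * arcKernel s Q H t := by
        gcongr
        exact single_le_sum (f := fun q : ℕ => (q : ℝ) ^ (-(1 + s)) *
          ∑ a ∈ range q, fejer H (t - a / q))
          (fun q _ => mul_nonneg (by positivity) (sum_nonneg fun a _ => fejer_nonneg _ _))
          (mem_Icc.2 ⟨hq, hqQ⟩)

lemma sum_range_e_sub_div {q : ℕ} (hq : 0 < q) (m : ℤ) (t : ℝ) :
    ∑ a ∈ range q, e (m * (t - a / q)) = if (q : ℤ) ∣ m then q * e (m * t) else 0 := by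
  have hterm (a : ℕ) : e (m * (t - a / q)) = e (m * t) * e ((-m : ℤ) * a / q) := by
    rw [← e_add]
    push_cast
    ring_nf
  simp only [hterm, ← mul_sum, sum_range_e_mul_div hq, Int.dvd_neg]
  split_ifs <;> ring

lemma sum_rpow_mul_sum_range_e_sub_div (s : ℝ) (Q : ℕ) (m : ℤ) (t : ℝ) :
    ∑ q ∈ Icc 1 Q, (((q : ℝ) ^ (-(1 + s)) : ℝ) : ℂ) * ∑ a ∈ range q, e (m * (t - a / q)) =
      divisorWeight s Q m * e (m * t) := by
  rw [divisorWeight, Complex.ofReal_sum, sum_mul, sum_filter]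
  refine sum_congr rfl fun q hq => ?_
  have hq0 : 0 < q := (mem_Icc.1 hq).1
  have hpow : (q : ℝ) ^ (-s) = (q : ℝ) ^ (-(1 + s)) * q := by
    rw [← Real.rpow_add_one (by positivity)]
    ring_nf
  rw [sum_range_e_sub_div hq0, hpow]
  split_ifs
  · push_cast
    ring
  · ring

lemma ofReal_arcKernel_eq (s : ℝ) (Q H : ℕ) (t : ℝ) : (arcKernel s Q H t : ℂ) =
    (∑ p ∈ range H ×ˢ range H, divisorWeight s Q (p.1 - p.2) * e ((p.1 - p.2 : ℤ) * t)) /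
      H ^ 2 := by
  have hq (q : ℕ) : (((q : ℝ) ^ (-(1 + s)) : ℝ) : ℂ) * ∑ a ∈ range q, (fejer H (t - a / q) : ℂ) =
      (∑ p ∈ range H ×ˢ range H, (((q : ℝ) ^ (-(1 + s)) : ℝ) : ℂ) *
        ∑ a ∈ range q, e ((p.1 - p.2 : ℤ) * (t - a / q))) / H ^ 2 := by
    simp only [ofReal_fejer_eq]
    rw [← sum_div, sum_comm, ← mul_sum, mul_div_assoc]
  rw [arcKernel, Complex.ofReal_sum]
  simp only [Complex.ofReal_mul, Complex.ofReal_sum, hq]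
  rw [← sum_div, sum_comm]
  simp only [sum_rpow_mul_sum_range_e_sub_div]

lemma sum_arcKernel_sub_eq {ι : Type*} (s : ℝ) (Q H : ℕ) (A : Finset ι) (θ : ι → ℝ) :
    ∑ i ∈ A, ∑ j ∈ A, arcKernel s Q H (θ i - θ j) =
      (∑ p ∈ range H ×ˢ range H,
        divisorWeight s Q (p.1 - p.2) * ‖∑ i ∈ A, e ((p.1 - p.2 : ℤ) * θ i)‖ ^ 2) / H ^ 2 := by
  have hnorm (m : ℤ) : ((‖∑ i ∈ A, e (m * θ i)‖ ^ 2 : ℝ) : ℂ) =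
      ∑ p ∈ A ×ˢ A, e (m * (θ p.1 - θ p.2)) := by
    rw [norm_sum_sq_eq, ← sum_product']
    refine sum_congr rfl fun p _ => ?_
    rw [conj_e, ← e_add]
    ring_nf
  rw [← sum_product', ← Complex.ofReal_inj, Complex.ofReal_sum, Complex.ofReal_div,
    Complex.ofReal_sum]
  simp only [Complex.ofReal_mul, hnorm, ofReal_arcKernel_eq, mul_sum, ← sum_div]
  rw [sum_comm]
  push_cast
  rfl

lemma sum_mul_le_of_sum_le_of_sum_rpow_le {ι : Type*} {S : Finset ι} {w g : ι → ℝ} {p B X Y : ℝ}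
    (hp : 1 ≤ p) (hw : ∀ i, 0 ≤ w i) (hg : ∀ i, 0 ≤ g i) (hB : ∀ i, w i ≤ B)
    (hX : ∑ i ∈ S, w i ≤ X) (hY : ∑ i ∈ S, g i ^ p ≤ Y) (hB0 : 0 ≤ B) :
    ∑ i ∈ S, w i * g i ≤ X ^ (1 - p⁻¹) * (B * Y) ^ p⁻¹ := by
  have hgp (i : ι) : 0 ≤ g i ^ p := Real.rpow_nonneg (hg i) p
  have hwX : 0 ≤ ∑ i ∈ S, w i := sum_nonneg fun i _ => hw i
  have hwY : 0 ≤ ∑ i ∈ S, w i * g i ^ p := sum_nonneg fun i _ => mul_nonneg (hw i) (hgp i)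
  have hBY : ∑ i ∈ S, w i * g i ^ p ≤ B * Y := calc
    ∑ i ∈ S, w i * g i ^ p ≤ ∑ i ∈ S, B * g i ^ p :=
        sum_le_sum fun i _ => mul_le_mul_of_nonneg_right (hB i) (hgp i)
    _ ≤ B * Y := by
        rw [← mul_sum]
        gcongr
  have hp1 : 0 ≤ 1 - p⁻¹ := sub_nonneg.2 (inv_le_one_of_one_le₀ hp)
  refine (Real.inner_le_weight_mul_Lp_of_nonneg S hp w g hw hg).trans ?_
  have hX0 : 0 ≤ X := hwX.trans hX
  gcongr

lemma exists_sum_divisorWeight_mul_norm_sq_le (hs : 0 < s) : ∃ C : ℝ, 1 ≤ C ∧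
    ∀ (M Q H l : ℕ) (A : Finset ℕ), A ⊆ range M → Q ^ 8 ≤ 2 * H → 2 * H ≤ M → l < H →
      ∑ k ∈ range H, divisorWeight s Q (k - l) *
        ‖∑ j ∈ A, e ((2 * (k - l) : ℤ) * j / M)‖ ^ 2 ≤
      C * ((M * #A : ℝ) ^ (7 / 8 : ℝ) * (#A ^ 2 * H : ℝ) ^ (1 / 8 : ℝ)) := by
  obtain ⟨C, hC, hmoment⟩ := exists_sum_divisorWeight_pow_two_pow_le hs 3
  refine ⟨C, hC, fun M Q H l A hA hQ hH hl => ?_⟩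
  set w : ℕ → ℝ := fun k => ‖∑ j ∈ A, e ((2 * (k - l) : ℤ) * j / M)‖ ^ 2
  have hw_le (k : ℕ) : w k ≤ (#A : ℝ) ^ 2 := by
    refine pow_le_pow_left₀ (norm_nonneg _) ((norm_sum_le _ _).trans ?_) 2
    simp only [norm_e, sum_const, nsmul_one, le_refl]
  have hw_sum : ∑ k ∈ range H, w k ≤ M * #A := by
    refine dual_large_sieve (by omega) (fun a ha b hb hdvd => ?_) hA
    rw [mem_range] at ha hb
    have := Int.eq_zero_of_abs_lt_dvd hdvd (by rw [abs_lt]; constructor <;> omega)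
    omega
  have hmoment_rpow : ∑ k ∈ range H, divisorWeight s Q (k - l) ^ (8 : ℝ) ≤ C * H := by
    simp only [Real.rpow_ofNat]
    exact hmoment Q H l hQ hl
  calc ∑ k ∈ range H, divisorWeight s Q (k - l) * w k
      = ∑ k ∈ range H, w k * divisorWeight s Q (k - l) := by simp only [mul_comm]
    _ ≤ (M * #A : ℝ) ^ (1 - (8 : ℝ)⁻¹) * (#A ^ 2 * (C * H) : ℝ) ^ (8 : ℝ)⁻¹ :=
        sum_mul_le_of_sum_le_of_sum_rpow_le (by norm_num) (fun _ => by positivity)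
          (fun _ => divisorWeight_nonneg _ _ _) hw_le hw_sum hmoment_rpow (by positivity)
    _ = C ^ (1 / 8 : ℝ) * ((M * #A : ℝ) ^ (7 / 8 : ℝ) * (#A ^ 2 * H : ℝ) ^ (1 / 8 : ℝ)) := by
        rw [mul_left_comm _ C, Real.mul_rpow (x := C) (by positivity) (by positivity),
          show 1 - (8 : ℝ)⁻¹ = 7 / 8 by norm_num, inv_eq_one_div]
        ring
    _ ≤ C * ((M * #A : ℝ) ^ (7 / 8 : ℝ) * (#A ^ 2 * H : ℝ) ^ (1 / 8 : ℝ)) := by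
        gcongr
        exact Real.rpow_le_self_of_one_le hC (by norm_num)

lemma exists_sum_arcKernel_le (hs : 0 < s) : ∃ C : ℝ, 1 ≤ C ∧
    ∀ (M Q H : ℕ) (A : Finset ℕ), 0 < H → A ⊆ range M → Q ^ 8 ≤ 2 * H → 2 * H ≤ M →
      ∑ i ∈ A, ∑ j ∈ A, arcKernel s Q H (2 * i / M - 2 * j / M) ≤
        C * (M / H : ℝ) ^ (7 / 8 : ℝ) * (#A : ℝ) ^ (9 / 8 : ℝ) := by
  obtain ⟨C, hC, hholder⟩ := exists_sum_divisorWeight_mul_norm_sq_le hs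
  refine ⟨C, hC, fun M Q H A hH0 hA hQ hH => ?_⟩
  set R : ℝ := (#A : ℝ)
  have hpow : (M * R) ^ (7 / 8 : ℝ) * (R ^ 2 * H) ^ (1 / 8 : ℝ) =
      H * ((M / H : ℝ) ^ (7 / 8 : ℝ) * R ^ (9 / 8 : ℝ)) := by
    have hH' : (H : ℝ) = (H : ℝ) ^ (7 / 8 : ℝ) * (H : ℝ) ^ (1 / 8 : ℝ) := by
      rw [← Real.rpow_add (by positivity)]
      norm_num
    have hR : R ^ (9 / 8 : ℝ) = R ^ (7 / 8 : ℝ) * (R ^ 2) ^ (1 / 8 : ℝ) := by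
      rw [← Real.rpow_natCast_mul (by positivity),
        ← Real.rpow_add_of_nonneg (by positivity) (by norm_num) (by norm_num)]
      norm_num
    rw [Real.mul_rpow (by positivity) (by positivity),
      Real.mul_rpow (by positivity) (by positivity), Real.div_rpow (by positivity) (by positivity),
      hR]
    nth_rewrite 2 [hH']
    field_simp
  have hpoint (m : ℤ) (j : ℕ) : e (m * (2 * j / M)) = e ((2 * m : ℤ) * j / M) := by
    push_cast
    ring_nf
  rw [sum_arcKernel_sub_eq, div_le_iff₀ (by positivity), sum_product_right]
  simp only [hpoint]
  calc ∑ l ∈ range H, ∑ k ∈ range H, divisorWeight s Q (k - l) *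
        ‖∑ j ∈ A, e ((2 * (k - l) : ℤ) * j / M)‖ ^ 2
      ≤ ∑ _l ∈ range H, C * ((M * R) ^ (7 / 8 : ℝ) * (R ^ 2 * H) ^ (1 / 8 : ℝ)) :=
        sum_le_sum fun l hl => hholder M Q H l A hA hQ hH (mem_range.1 hl)
    _ = C * (M / H : ℝ) ^ (7 / 8 : ℝ) * R ^ (9 / 8 : ℝ) * H ^ 2 := by
        rw [sum_const, card_range, nsmul_eq_mul, hpow]
        ring

end Fejer

/-! ### A majorant for Weyl sums -/

section Majorant

variable {N : ℕ}

/-- The largest denominator `q` of the major arcs. -/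
def denominatorBound (N : ℕ) : ℕ := ⌊(N : ℝ) ^ (1 / 8 : ℝ)⌋₊

/-- The exponents `i` of the dyadic scales `2 ^ i` into which the distance from `2 θ` to the centre
of a major arc, in units of `N⁻²`, is divided. -/
def scales (N : ℕ) : Finset ℕ := {i ∈ range (denominatorBound N) | 2 ^ i ≤ denominatorBound N}

/-- The length of the Fejér kernel that detects the arcs of scale `2 ^ i`. -/
def kernelLength (N i : ℕ) : ℕ := N ^ 2 / 2 ^ i

lemma denominatorBound_pow_le (N : ℕ) : denominatorBound N ^ 8 ≤ N := by
  have hfloor : (denominatorBound N : ℝ) ≤ (N : ℝ) ^ (1 / 8 : ℝ) := Nat.floor_le (by positivity)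
  have hpow : (denominatorBound N : ℝ) ^ 8 ≤ (N : ℝ) := calc
    (denominatorBound N : ℝ) ^ 8 ≤ ((N : ℝ) ^ (1 / 8 : ℝ)) ^ 8 := by gcongr
    _ = (N : ℝ) := by
        rw [← Real.rpow_mul_natCast N.cast_nonneg]
        norm_num
  exact_mod_cast hpow

lemma mem_scales {i : ℕ} : i ∈ scales N ↔ 2 ^ i ≤ denominatorBound N := by
  rw [scales, mem_filter, mem_range, and_iff_right_iff_imp]
  exact i.lt_two_pow_self.trans_le

lemma two_pow_mul_kernelLength_le (N i : ℕ) : (2 ^ i * kernelLength N i : ℝ) ≤ N ^ 2 := by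
  exact_mod_cast Nat.mul_div_le (N ^ 2) (2 ^ i)

lemma le_kernelLength {i : ℕ} (hi : i ∈ scales N) : N ≤ kernelLength N i := by
  have hiN : 2 ^ i ≤ N := (mem_scales.1 hi).trans <|
    (Nat.le_self_pow (by norm_num) _).trans (denominatorBound_pow_le N)
  rw [kernelLength, Nat.le_div_iff_mul_le (by positivity), sq]
  exact Nat.mul_le_mul_left N hiN

lemma sq_le_two_mul_kernelLength {i : ℕ} (hi : i ∈ scales N) (hN : 1 ≤ N) :
    N ^ 2 ≤ 2 * 2 ^ i * kernelLength N i := by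
  have hdiv := Nat.lt_mul_div_succ (N ^ 2) (b := 2 ^ i) (by positivity)
  have hH : 1 ≤ kernelLength N i := hN.trans (le_kernelLength hi)
  rw [kernelLength] at hH ⊢
  nlinarith [Nat.mul_le_mul_left (2 ^ i) hH]

lemma exists_two_pow_near {x : ℝ} (hx : 0 ≤ x) : ∃ i : ℕ, 8 * x ≤ 2 ^ i ∧ 2 ^ i ≤ 16 * (1 + x) := by
  obtain ⟨i, hle, hlt⟩ := exists_nat_pow_near (show 1 ≤ 1 + 8 * x by linarith) one_lt_two
  exact ⟨i + 1, by linarith, by rw [pow_succ]; linarith⟩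

lemma exists_scale_norm_weylSum_sq_le (hN : 1 ≤ N) (θ : ℝ) : ∃ (a : ℤ) (q i : ℕ), 0 < q ∧
    8 * N ^ 2 * |2 * θ - a / q| ≤ 2 ^ i ∧ ‖weylSum N θ‖ ^ 2 ≤
      643 * (N : ℝ) ^ (9 / 8 : ℝ) + 10288 * (N ^ 2 / q * ((2 : ℝ) ^ i) ^ (-(7 / 8) : ℝ)) := by
  obtain ⟨a, q, hq, hweyl⟩ := exists_norm_weylSum_sq_le hN θ
  obtain ⟨i, hle, hge⟩ := exists_two_pow_near (x := N ^ 2 * |2 * θ - a / q|) (by positivity)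
  refine ⟨a, q, i, hq, by linarith, hweyl.trans ?_⟩
  have hscale : (1 + N ^ 2 * |2 * θ - a / q|) ^ (-(7 / 8) : ℝ) ≤
      16 * ((2 : ℝ) ^ i) ^ (-(7 / 8) : ℝ) := calc
    (1 + N ^ 2 * |2 * θ - a / q|) ^ (-(7 / 8) : ℝ) ≤ ((2 : ℝ) ^ i / 16) ^ (-(7 / 8) : ℝ) :=
        Real.rpow_le_rpow_of_nonpos (by positivity) (by linarith) (by norm_num)
    _ = 16 ^ (7 / 8 : ℝ) * ((2 : ℝ) ^ i) ^ (-(7 / 8) : ℝ) := by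
        rw [Real.div_rpow (by positivity) (by norm_num), Real.rpow_neg (by norm_num : (0 : ℝ) ≤ 16)]
        field_simp
    _ ≤ 16 * ((2 : ℝ) ^ i) ^ (-(7 / 8) : ℝ) := by
        gcongr
        exact Real.rpow_le_self_of_one_le (by norm_num) (by norm_num)
  have hmul := mul_le_mul_of_nonneg_left hscale (show (0 : ℝ) ≤ N ^ 2 / q by positivity)
  linarith

lemma mul_lt_rpow_of_lt {q i : ℕ} (hN : 1 ≤ N) (hq : 0 < q)
    (h : (N : ℝ) ^ (121 / 64 : ℝ) < N ^ 2 / q * ((2 : ℝ) ^ i) ^ (-(7 / 8) : ℝ)) :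
    (q * 2 ^ i : ℝ) < (N : ℝ) ^ (1 / 8 : ℝ) := by
  by_contra! hle
  refine h.not_ge ?_
  have hq1 : (1 : ℝ) ≤ q := by exact_mod_cast hq
  calc N ^ 2 / q * ((2 : ℝ) ^ i) ^ (-(7 / 8) : ℝ)
      = (N : ℝ) ^ 2 * ((q : ℝ) ^ (-1 : ℝ) * ((2 : ℝ) ^ i) ^ (-(7 / 8) : ℝ)) := by
        rw [Real.rpow_neg_one]
        ring
    _ ≤ (N : ℝ) ^ 2 * ((q : ℝ) ^ (-(7 / 8) : ℝ) * ((2 : ℝ) ^ i) ^ (-(7 / 8) : ℝ)) := by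
        gcongr
        norm_num
    _ = (N : ℝ) ^ 2 * (q * 2 ^ i) ^ (-(7 / 8) : ℝ) := by
        rw [Real.mul_rpow (by positivity) (by positivity)]
    _ ≤ (N : ℝ) ^ 2 * ((N : ℝ) ^ (1 / 8 : ℝ)) ^ (-(7 / 8) : ℝ) := by
        gcongr ?_ * ?_
        exact Real.rpow_le_rpow_of_nonpos (by positivity) hle (by norm_num)
    _ = (N : ℝ) ^ (121 / 64 : ℝ) := by
        rw [← Real.rpow_mul (by positivity), ← Real.rpow_natCast, ← Real.rpow_add (by positivity)]
        norm_num

lemma norm_weylSum_sq_le_or (hN : 1 ≤ N) (θ : ℝ) :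
    ‖weylSum N θ‖ ^ 2 ≤ 11000 * (N : ℝ) ^ (121 / 64 : ℝ) ∨
    ∃ (a : ℤ) (q i : ℕ), 0 < q ∧ q ≤ denominatorBound N ∧ i ∈ scales N ∧
      8 * N ^ 2 * |2 * θ - a / q| ≤ 2 ^ i ∧
      ‖weylSum N θ‖ ^ 2 ≤ 11000 * (N ^ 2 / q * ((2 : ℝ) ^ i) ^ (-(7 / 8) : ℝ)) := by
  obtain ⟨a, q, i, hq, hscale, hweyl⟩ := exists_scale_norm_weylSum_sq_le hN θ
  have hpow : (N : ℝ) ^ (9 / 8 : ℝ) ≤ (N : ℝ) ^ (121 / 64 : ℝ) :=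
    Real.rpow_le_rpow_of_exponent_le (by exact_mod_cast hN) (by norm_num)
  have hpos : 0 ≤ (N : ℝ) ^ (9 / 8 : ℝ) := by positivity
  rcases le_or_gt (N ^ 2 / q * ((2 : ℝ) ^ i) ^ (-(7 / 8) : ℝ)) ((N : ℝ) ^ (121 / 64 : ℝ)) with
    hminor | hmajor
  · left
    linarith
  · right
    have hlt : ((q * 2 ^ i : ℕ) : ℝ) < (N : ℝ) ^ (1 / 8 : ℝ) := by
      exact_mod_cast mul_lt_rpow_of_lt hN hq hmajor
    have hbound : q * 2 ^ i ≤ denominatorBound N := Nat.le_floor hlt.le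
    exact ⟨a, q, i, hq, (Nat.le_mul_of_pos_right q (by positivity)).trans hbound,
      mem_scales.2 ((Nat.le_mul_of_pos_left _ hq).trans hbound), hscale, by linarith⟩

/-- A majorant for `(‖weylSum N θ‖ / N) ^ (17 / 8)`, up to a constant: the first term accounts for
the minor arcs, the sum over scales for the major arcs. -/
def weylMajorant (N : ℕ) (θ : ℝ) : ℝ :=
  (N : ℝ) ^ (-(119 / 1024) : ℝ) + ∑ i ∈ scales N, ((2 : ℝ) ^ i) ^ (-(119 / 128) : ℝ) *
    arcKernel (1 / 16) (denominatorBound N) (kernelLength N i) (2 * θ)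

lemma rpow_neg_le_weylMajorant (N : ℕ) (θ : ℝ) :
    (N : ℝ) ^ (-(119 / 1024) : ℝ) ≤ weylMajorant N θ :=
  le_add_of_nonneg_right <| sum_nonneg fun i _ =>
    mul_nonneg (by positivity) (arcKernel_nonneg _ _ _ _)

lemma mul_arcKernel_le_weylMajorant {i : ℕ} (hi : i ∈ scales N) (θ : ℝ) :
    ((2 : ℝ) ^ i) ^ (-(119 / 128) : ℝ) *
      arcKernel (1 / 16) (denominatorBound N) (kernelLength N i) (2 * θ) ≤ weylMajorant N θ :=
  (single_le_sum (f := fun i : ℕ => ((2 : ℝ) ^ i) ^ (-(119 / 128) : ℝ) *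
      arcKernel (1 / 16) (denominatorBound N) (kernelLength N i) (2 * θ))
    (fun i _ => mul_nonneg (by positivity) (arcKernel_nonneg _ _ _ _)) hi).trans
    (le_add_of_nonneg_left (by positivity))

lemma rpow_le_four_mul_weylMajorant (hN : 1 ≤ N) {θ : ℝ} {a : ℤ} {q i : ℕ} (hq : 0 < q)
    (hqQ : q ≤ denominatorBound N) (hi : i ∈ scales N)
    (hθ : 8 * N ^ 2 * |2 * θ - a / q| ≤ 2 ^ i) :
    (N ^ 2 / q * ((2 : ℝ) ^ i) ^ (-(7 / 8) : ℝ)) ^ (17 / 16 : ℝ) ≤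
      4 * ((N : ℝ) ^ (17 / 8 : ℝ) * weylMajorant N θ) := by
  have hH : 8 * kernelLength N i * |2 * θ - a / q| ≤ 1 := by
    have hlen := mul_le_mul_of_nonneg_right (two_pow_mul_kernelLength_le N i)
      (abs_nonneg (2 * θ - a / q))
    refine le_of_mul_le_mul_left ?_ (show (0 : ℝ) < 2 ^ i by positivity)
    linarith
  have hker := rpow_neg_le_four_mul_arcKernel (1 / 16) (hN.trans (le_kernelLength hi)) hq hqQ hH
  calc (N ^ 2 / q * ((2 : ℝ) ^ i) ^ (-(7 / 8) : ℝ)) ^ (17 / 16 : ℝ)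
      = (N : ℝ) ^ (17 / 8 : ℝ) *
          (((2 : ℝ) ^ i) ^ (-(119 / 128) : ℝ) * (q : ℝ) ^ (-(1 + 1 / 16) : ℝ)) := by
        rw [Real.mul_rpow (by positivity) (by positivity), Real.div_rpow (by positivity)
          (by positivity), ← Real.rpow_mul (by positivity), ← Real.rpow_natCast_mul N.cast_nonneg,
          Real.rpow_neg q.cast_nonneg]
        norm_num
        ring
    _ ≤ (N : ℝ) ^ (17 / 8 : ℝ) * (((2 : ℝ) ^ i) ^ (-(119 / 128) : ℝ) *
          (4 * arcKernel (1 / 16) (denominatorBound N) (kernelLength N i) (2 * θ))) := by gcongr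
    _ = 4 * ((N : ℝ) ^ (17 / 8 : ℝ) * (((2 : ℝ) ^ i) ^ (-(119 / 128) : ℝ) *
          arcKernel (1 / 16) (denominatorBound N) (kernelLength N i) (2 * θ))) := by ring
    _ ≤ 4 * ((N : ℝ) ^ (17 / 8 : ℝ) * weylMajorant N θ) := by
        gcongr
        exact mul_arcKernel_le_weylMajorant hi θ

theorem exists_norm_weylSum_rpow_le : ∃ C : ℝ, 1 ≤ C ∧ ∀ N : ℕ, 1 ≤ N → ∀ θ : ℝ,
    ‖weylSum N θ‖ ^ (17 / 8 : ℝ) ≤ C * (N : ℝ) ^ (17 / 8 : ℝ) * weylMajorant N θ := by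
  have hconst : (1 : ℝ) ≤ 11000 ^ (17 / 16 : ℝ) := Real.one_le_rpow (by norm_num) (by norm_num)
  refine ⟨11000 ^ (17 / 16 : ℝ) * 4, by linarith, fun N hN θ => ?_⟩
  have hsq : ‖weylSum N θ‖ ^ (17 / 8 : ℝ) = (‖weylSum N θ‖ ^ 2) ^ (17 / 16 : ℝ) := by
    rw [← Real.rpow_natCast_mul (norm_nonneg _)]
    norm_num
  suffices h : ∃ Y : ℝ, 0 ≤ Y ∧ ‖weylSum N θ‖ ^ 2 ≤ 11000 * Y ∧
      Y ^ (17 / 16 : ℝ) ≤ 4 * ((N : ℝ) ^ (17 / 8 : ℝ) * weylMajorant N θ) by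
    obtain ⟨Y, hY, hweyl, hYpow⟩ := h
    calc ‖weylSum N θ‖ ^ (17 / 8 : ℝ) ≤ (11000 * Y) ^ (17 / 16 : ℝ) := by
          rw [hsq]
          gcongr
      _ = 11000 ^ (17 / 16 : ℝ) * Y ^ (17 / 16 : ℝ) := Real.mul_rpow (by norm_num) hY
      _ ≤ 11000 ^ (17 / 16 : ℝ) * (4 * ((N : ℝ) ^ (17 / 8 : ℝ) * weylMajorant N θ)) := by gcongr
      _ = 11000 ^ (17 / 16 : ℝ) * 4 * (N : ℝ) ^ (17 / 8 : ℝ) * weylMajorant N θ := by ring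
  rcases norm_weylSum_sq_le_or hN θ with hminor | ⟨a, q, i, hq, hqQ, hi, hθ, hmajor⟩
  · refine ⟨_, by positivity, hminor, ?_⟩
    have hmaj := rpow_neg_le_weylMajorant N θ
    calc ((N : ℝ) ^ (121 / 64 : ℝ)) ^ (17 / 16 : ℝ)
        = (N : ℝ) ^ (17 / 8 : ℝ) * (N : ℝ) ^ (-(119 / 1024) : ℝ) := by
          rw [← Real.rpow_mul (by positivity), ← Real.rpow_add (by positivity)]
          norm_num
      _ ≤ 4 * ((N : ℝ) ^ (17 / 8 : ℝ) * weylMajorant N θ) := by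
          have : 0 ≤ weylMajorant N θ := le_trans (by positivity) hmaj
          nlinarith [mul_le_mul_of_nonneg_left hmaj (show 0 ≤ (N : ℝ) ^ (17 / 8 : ℝ) by positivity),
            show 0 ≤ (N : ℝ) ^ (17 / 8 : ℝ) * weylMajorant N θ by positivity]
  · exact ⟨_, by positivity, hmajor, rpow_le_four_mul_weylMajorant hN hq hqQ hi hθ⟩

lemma sum_two_pow_rpow_neg_le {c : ℝ} (hc : 0 < c) (I : Finset ℕ) :
    ∑ i ∈ I, ((2 : ℝ) ^ i) ^ (-c) ≤ (1 - 2 ^ (-c))⁻¹ := by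
  have hlt : (2 : ℝ) ^ (-c) < 1 := Real.rpow_lt_one_of_one_lt_of_neg one_lt_two (neg_lt_zero.2 hc)
  simp only [← Real.rpow_pow_comm zero_le_two]
  rw [← tsum_geometric_of_lt_one (by positivity) hlt]
  exact (summable_geometric_of_lt_one (by positivity) hlt).sum_le_tsum I fun _ _ => by positivity

lemma exists_sum_arcKernel_kernelLength_le : ∃ C : ℝ, 1 ≤ C ∧ ∀ (N i : ℕ) (A : Finset ℕ), 1 ≤ N →
    i ∈ scales N → A ⊆ range (4 * N ^ 2) →
    ∑ r ∈ A, ∑ s ∈ A, arcKernel (1 / 16) (denominatorBound N) (kernelLength N i)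
        (2 * (r / (4 * N ^ 2 : ℕ) - s / (4 * N ^ 2 : ℕ))) ≤
      C * ((2 : ℝ) ^ i) ^ (7 / 8 : ℝ) * (#A : ℝ) ^ (9 / 8 : ℝ) := by
  obtain ⟨C, hC, hpairs⟩ := exists_sum_arcKernel_le (s := 1 / 16) (by norm_num)
  refine ⟨C * 8, by linarith, fun N i A hN hi hA => ?_⟩
  have hNH := le_kernelLength hi
  have hH : 0 < kernelLength N i := hN.trans hNH
  have hQ : denominatorBound N ^ 8 ≤ 2 * kernelLength N i := by
    have := denominatorBound_pow_le N
    omega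
  have hHM : 2 * kernelLength N i ≤ 4 * N ^ 2 := by
    have : kernelLength N i ≤ N ^ 2 := Nat.div_le_self _ _
    omega
  have hratio : ((4 * N ^ 2 : ℕ) / kernelLength N i : ℝ) ≤ 8 * 2 ^ i := by
    rw [div_le_iff₀ (by positivity)]
    have := sq_le_two_mul_kernelLength hi hN
    exact_mod_cast (by linarith : 4 * N ^ 2 ≤ 8 * 2 ^ i * kernelLength N i)
  simp only [mul_sub, ← mul_div_assoc]
  refine (hpairs _ _ _ A hH hA hQ hHM).trans ?_
  calc C * ((4 * N ^ 2 : ℕ) / kernelLength N i : ℝ) ^ (7 / 8 : ℝ) * (#A : ℝ) ^ (9 / 8 : ℝ)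
      ≤ C * (8 * 2 ^ i) ^ (7 / 8 : ℝ) * (#A : ℝ) ^ (9 / 8 : ℝ) := by gcongr
    _ = C * 8 ^ (7 / 8 : ℝ) * ((2 : ℝ) ^ i) ^ (7 / 8 : ℝ) * (#A : ℝ) ^ (9 / 8 : ℝ) := by
        rw [Real.mul_rpow (by norm_num) (by positivity)]
        ring
    _ ≤ C * 8 * ((2 : ℝ) ^ i) ^ (7 / 8 : ℝ) * (#A : ℝ) ^ (9 / 8 : ℝ) := by
        gcongr
        exact Real.rpow_le_self_of_one_le (by norm_num) (by norm_num)

lemma exists_sum_weylMajorant_le : ∃ C : ℝ, 1 ≤ C ∧ ∀ (N : ℕ) (A : Finset ℕ), 1 ≤ N →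
    A ⊆ range (4 * N ^ 2) →
    ∑ r ∈ A, ∑ s ∈ A, weylMajorant N (r / (4 * N ^ 2 : ℕ) - s / (4 * N ^ 2 : ℕ)) ≤
      (N : ℝ) ^ (-(119 / 1024) : ℝ) * (#A : ℝ) ^ 2 + C * (#A : ℝ) ^ (9 / 8 : ℝ) := by
  obtain ⟨C, hC, hscale⟩ := exists_sum_arcKernel_kernelLength_le
  have hgeom := sum_two_pow_rpow_neg_le (c := 7 / 128) (by norm_num)
  set G : ℝ := (1 - 2 ^ (-(7 / 128) : ℝ))⁻¹
  have hG : 1 ≤ G := by simpa using hgeom {0}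
  refine ⟨C * G, one_le_mul_of_one_le_of_one_le hC hG, fun N A hN hA => ?_⟩
  have hsum : ∑ i ∈ scales N, ((2 : ℝ) ^ i) ^ (-(119 / 128) : ℝ) *
      ∑ r ∈ A, ∑ s ∈ A, arcKernel (1 / 16) (denominatorBound N) (kernelLength N i)
        (2 * (r / (4 * N ^ 2 : ℕ) - s / (4 * N ^ 2 : ℕ))) ≤ C * G * (#A : ℝ) ^ (9 / 8 : ℝ) := calc
    _ ≤ ∑ i ∈ scales N, ((2 : ℝ) ^ i) ^ (-(119 / 128) : ℝ) *
          (C * ((2 : ℝ) ^ i) ^ (7 / 8 : ℝ) * (#A : ℝ) ^ (9 / 8 : ℝ)) := by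
        gcongr with i hi
        exact hscale N i A hN hi hA
    _ = C * (∑ i ∈ scales N, ((2 : ℝ) ^ i) ^ (-(7 / 128) : ℝ)) * (#A : ℝ) ^ (9 / 8 : ℝ) := by
        rw [mul_sum, sum_mul]
        refine sum_congr rfl fun i _ => ?_
        rw [show (-(7 / 128) : ℝ) = -(119 / 128) + 7 / 8 by norm_num,
          Real.rpow_add (by positivity)]
        ring
    _ ≤ C * G * (#A : ℝ) ^ (9 / 8 : ℝ) := by
        gcongr
        exact hgeom _
  have hexpand : ∑ r ∈ A, ∑ s ∈ A, weylMajorant N (r / (4 * N ^ 2 : ℕ) - s / (4 * N ^ 2 : ℕ)) =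
      (N : ℝ) ^ (-(119 / 1024) : ℝ) * (#A : ℝ) ^ 2 +
        ∑ i ∈ scales N, ((2 : ℝ) ^ i) ^ (-(119 / 128) : ℝ) *
          ∑ r ∈ A, ∑ s ∈ A, arcKernel (1 / 16) (denominatorBound N) (kernelLength N i)
            (2 * (r / (4 * N ^ 2 : ℕ) - s / (4 * N ^ 2 : ℕ))) := by
    simp only [weylMajorant, sum_add_distrib, sum_const, nsmul_eq_mul, mul_sum]
    rw [sum_comm (s := scales N)]
    congr 1
    · ring
    · exact sum_congr rfl fun r _ => sum_comm
  linarith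

theorem exists_sum_norm_weylSum_rpow_le : ∃ C : ℝ, 1 ≤ C ∧ ∀ (N : ℕ) (A : Finset ℕ), 1 ≤ N →
    A ⊆ range (4 * N ^ 2) →
    ∑ r ∈ A, ∑ s ∈ A, ‖weylSum N (r / (4 * N ^ 2 : ℕ) - s / (4 * N ^ 2 : ℕ))‖ ^ (17 / 8 : ℝ) ≤
      C * (N : ℝ) ^ (17 / 8 : ℝ) *
        ((N : ℝ) ^ (-(119 / 1024) : ℝ) * (#A : ℝ) ^ 2 + (#A : ℝ) ^ (9 / 8 : ℝ)) := by
  obtain ⟨C, hC, hmajorant⟩ := exists_norm_weylSum_rpow_le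
  obtain ⟨D, hD, hpairs⟩ := exists_sum_weylMajorant_le
  refine ⟨C * D, one_le_mul_of_one_le_of_one_le hC hD, fun N A hN hA => ?_⟩
  calc ∑ r ∈ A, ∑ s ∈ A, ‖weylSum N (r / (4 * N ^ 2 : ℕ) - s / (4 * N ^ 2 : ℕ))‖ ^ (17 / 8 : ℝ)
      ≤ C * (N : ℝ) ^ (17 / 8 : ℝ) *
          ∑ r ∈ A, ∑ s ∈ A, weylMajorant N (r / (4 * N ^ 2 : ℕ) - s / (4 * N ^ 2 : ℕ)) := by
        simp only [mul_sum]
        exact sum_le_sum fun r _ => sum_le_sum fun s _ => hmajorant N hN _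
    _ ≤ C * (N : ℝ) ^ (17 / 8 : ℝ) * ((N : ℝ) ^ (-(119 / 1024) : ℝ) * (#A : ℝ) ^ 2 +
          D * (#A : ℝ) ^ (9 / 8 : ℝ)) := by
        gcongr
        exact hpairs N A hN hA
    _ ≤ C * (N : ℝ) ^ (17 / 8 : ℝ) * (D * ((N : ℝ) ^ (-(119 / 1024) : ℝ) * (#A : ℝ) ^ 2) +
          D * (#A : ℝ) ^ (9 / 8 : ℝ)) := by
        gcongr _ * (?_ + _)
        exact le_mul_of_one_le_left (by positivity) hD
    _ = C * D * (N : ℝ) ^ (17 / 8 : ℝ) *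
          ((N : ℝ) ^ (-(119 / 1024) : ℝ) * (#A : ℝ) ^ 2 + (#A : ℝ) ^ (9 / 8 : ℝ)) := by ring

end Majorant

/-! ### Level sets -/

/-- The exponential sum `∑ f x e(θ x²)` over `|x| ≤ N` whose moments are to be bounded. -/
def quadSum (N : ℕ) (f : ℤ → ℂ) (θ : ℝ) : ℂ := ∑ x ∈ Icc (-N : ℤ) N, f x * e (θ * x ^ 2)

/-- The squared `ℓ²` norm of `f` on `[-N, N]`. -/
def energy (N : ℕ) (f : ℤ → ℂ) : ℝ := ∑ x ∈ Icc (-N : ℤ) N, ‖f x‖ ^ 2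

lemma energy_nonneg (N : ℕ) (f : ℤ → ℂ) : 0 ≤ energy N f := sum_nonneg fun _ _ => by positivity

section Duality

variable {ι : Type*} (N : ℕ) (A : Finset ι) (θ : ι → ℝ)

lemma sum_norm_sum_mul_e_sq_le {c : ι → ℂ} (hc : ∀ r ∈ A, ‖c r‖ ≤ 1) :
    ∑ x ∈ Icc (-N : ℤ) N, ‖∑ r ∈ A, c r * e (θ r * x ^ 2)‖ ^ 2 ≤
      ∑ r ∈ A, ∑ s ∈ A, ‖weylSum N (θ r - θ s)‖ := by
  have hexpand : ((∑ x ∈ Icc (-N : ℤ) N, ‖∑ r ∈ A, c r * e (θ r * x ^ 2)‖ ^ 2 : ℝ) : ℂ) =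
      ∑ r ∈ A, ∑ s ∈ A, c r * starRingEnd ℂ (c s) * weylSum N (θ r - θ s) := by
    simp only [Complex.ofReal_sum, norm_sum_sq_eq, weylSum, mul_sum]
    rw [sum_comm]
    refine sum_congr rfl fun r _ => sum_comm.trans ?_
    refine sum_congr rfl fun s _ => sum_congr rfl fun x _ => ?_
    rw [map_mul, conj_e, sub_mul, sub_eq_add_neg, e_add]
    ring
  calc ∑ x ∈ Icc (-N : ℤ) N, ‖∑ r ∈ A, c r * e (θ r * x ^ 2)‖ ^ 2
      ≤ ‖∑ r ∈ A, ∑ s ∈ A, c r * starRingEnd ℂ (c s) * weylSum N (θ r - θ s)‖ := by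
        rw [← hexpand, Complex.norm_real]
        exact Real.le_norm_self _
    _ ≤ ∑ r ∈ A, ∑ s ∈ A, ‖c r * starRingEnd ℂ (c s) * weylSum N (θ r - θ s)‖ :=
        (norm_sum_le _ _).trans (sum_le_sum fun _ _ => norm_sum_le _ _)
    _ ≤ ∑ r ∈ A, ∑ s ∈ A, ‖weylSum N (θ r - θ s)‖ := by
        refine sum_le_sum fun r hr => sum_le_sum fun s hs => ?_
        rw [norm_mul, norm_mul, RCLike.norm_conj]
        exact mul_le_of_le_one_left (norm_nonneg _)
          (mul_le_one₀ (hc r hr) (norm_nonneg _) (hc s hs))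

lemma sum_norm_quadSum_sq_le (f : ℤ → ℂ) :
    (∑ r ∈ A, ‖quadSum N f (θ r)‖) ^ 2 ≤
      energy N f * ∑ r ∈ A, ∑ s ∈ A, ‖weylSum N (θ r - θ s)‖ := by
  choose c hc hphase using fun r => Complex.exists_norm_eq_mul_self (quadSum N f (θ r))
  have hswap : ((∑ r ∈ A, ‖quadSum N f (θ r)‖ : ℝ) : ℂ) =
      ∑ x ∈ Icc (-N : ℤ) N, f x * ∑ r ∈ A, c r * e (θ r * x ^ 2) := by
    simp only [Complex.ofReal_sum, hphase]
    simp only [quadSum, mul_sum]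
    rw [sum_comm]
    exact sum_congr rfl fun x _ => sum_congr rfl fun r _ => mul_left_comm _ _ _
  have hnorm : ∑ r ∈ A, ‖quadSum N f (θ r)‖ ≤
      ∑ x ∈ Icc (-N : ℤ) N, ‖f x‖ * ‖∑ r ∈ A, c r * e (θ r * x ^ 2)‖ := calc
    _ ≤ ‖((∑ r ∈ A, ‖quadSum N f (θ r)‖ : ℝ) : ℂ)‖ := by
        rw [Complex.norm_real]
        exact Real.le_norm_self _
    _ ≤ _ := by
        simp only [hswap, ← norm_mul]
        exact norm_sum_le _ _
  calc (∑ r ∈ A, ‖quadSum N f (θ r)‖) ^ 2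
      ≤ (∑ x ∈ Icc (-N : ℤ) N, ‖f x‖ * ‖∑ r ∈ A, c r * e (θ r * x ^ 2)‖) ^ 2 := by gcongr
    _ ≤ energy N f * ∑ x ∈ Icc (-N : ℤ) N, ‖∑ r ∈ A, c r * e (θ r * x ^ 2)‖ ^ 2 :=
        sum_mul_sq_le_sq_mul_sq _ _ _
    _ ≤ energy N f * ∑ r ∈ A, ∑ s ∈ A, ‖weylSum N (θ r - θ s)‖ :=
        mul_le_mul_of_nonneg_left (sum_norm_sum_mul_e_sq_le N A θ fun r _ => (hc r).le)
          (energy_nonneg N f)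

lemma sum_sum_rpow_le {p : ℝ} (hp : 1 ≤ p) {g : ι → ι → ℝ} (hg : ∀ r s, 0 ≤ g r s) :
    (∑ r ∈ A, ∑ s ∈ A, g r s) ^ p ≤
      ((#A : ℝ) ^ 2) ^ (p - 1) * ∑ r ∈ A, ∑ s ∈ A, g r s ^ p := by
  have := Real.rpow_sum_le_const_mul_sum_rpow_of_nonneg (A ×ˢ A)
    (f := fun x => g x.1 x.2) hp fun x _ => hg _ _
  rwa [sum_product, sum_product, card_product, Nat.cast_mul, ← sq] at this

lemma sq_rpow_mul_card_sq_le {p l : ℝ} (hp : 1 ≤ p) (hl : 0 ≤ l) {f : ℤ → ℂ}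
    (hA : ∀ r ∈ A, l ≤ ‖quadSum N f (θ r)‖) :
    (l ^ 2) ^ p * (#A : ℝ) ^ 2 ≤
      energy N f ^ p * ∑ r ∈ A, ∑ s ∈ A, ‖weylSum N (θ r - θ s)‖ ^ p := by
  rcases A.eq_empty_or_nonempty with rfl | hne
  · simp
  set R : ℝ := (#A : ℝ)
  have hR : 0 < R := Nat.cast_pos.2 hne.card_pos
  have hW : 0 ≤ ∑ r ∈ A, ∑ s ∈ A, ‖weylSum N (θ r - θ s)‖ := by positivity
  have hE := energy_nonneg N f
  have hsum : l * R ≤ ∑ r ∈ A, ‖quadSum N f (θ r)‖ := by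
    rw [mul_comm, ← nsmul_eq_mul]
    exact card_nsmul_le_sum A _ l hA
  refine le_of_mul_le_mul_left ?_ (show 0 < (R ^ 2) ^ (p - 1) by positivity)
  calc (R ^ 2) ^ (p - 1) * ((l ^ 2) ^ p * R ^ 2) = ((l * R) ^ 2) ^ p := by
        rw [mul_pow, Real.mul_rpow (by positivity) (by positivity),
          Real.rpow_sub_one (by positivity) p]
        field_simp
    _ ≤ (energy N f * ∑ r ∈ A, ∑ s ∈ A, ‖weylSum N (θ r - θ s)‖) ^ p := by
        gcongr
        exact (pow_le_pow_left₀ (by positivity) hsum 2).trans (sum_norm_quadSum_sq_le N A θ f)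
    _ ≤ energy N f ^ p * (((#A : ℝ) ^ 2) ^ (p - 1) *
          ∑ r ∈ A, ∑ s ∈ A, ‖weylSum N (θ r - θ s)‖ ^ p) := by
        rw [Real.mul_rpow hE hW]
        gcongr
        exact sum_sum_rpow_le A hp fun _ _ => norm_nonneg _
    _ = _ := by ring

end Duality

lemma exists_card_sq_le : ∃ C : ℝ, 1 ≤ C ∧ ∀ (N : ℕ) (f : ℤ → ℂ) (A : Finset ℕ) (l : ℝ), 1 ≤ N →
    A ⊆ range (4 * N ^ 2) → 0 < l → (∀ j ∈ A, l ≤ ‖quadSum N f (j / (4 * N ^ 2 : ℕ))‖) →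
    (#A : ℝ) ^ 2 ≤ C * (N * energy N f / l ^ 2) ^ (17 / 8 : ℝ) *
      ((N : ℝ) ^ (-(119 / 1024) : ℝ) * (#A : ℝ) ^ 2 + (#A : ℝ) ^ (9 / 8 : ℝ)) := by
  obtain ⟨C, hC, hpairs⟩ := exists_sum_norm_weylSum_rpow_le
  refine ⟨C, hC, fun N f A l hN hA hl hlevel => ?_⟩
  have hE := energy_nonneg N f
  have hduality := sq_rpow_mul_card_sq_le N A (fun j : ℕ => (j / (4 * N ^ 2 : ℕ) : ℝ))
    (p := 17 / 8) (by norm_num) hl.le hlevel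
  rw [Real.div_rpow (by positivity) (by positivity), Real.mul_rpow N.cast_nonneg hE]
  rw [← le_div_iff₀' (by positivity)] at hduality
  calc (#A : ℝ) ^ 2 ≤ _ := hduality
    _ ≤ energy N f ^ (17 / 8 : ℝ) * (C * (N : ℝ) ^ (17 / 8 : ℝ) *
          ((N : ℝ) ^ (-(119 / 1024) : ℝ) * (#A : ℝ) ^ 2 + (#A : ℝ) ^ (9 / 8 : ℝ))) /
            (l ^ 2) ^ (17 / 8 : ℝ) := by
        gcongr
        exact hpairs N A hN hA
    _ = _ := by ring

lemma le_rpow_of_sq_le {R K u : ℝ} (hR : 0 ≤ R) (hK : 0 ≤ K) (hu : 0 ≤ u)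
    (h : R ^ 2 ≤ K * u ^ (17 / 8 : ℝ) * R ^ (9 / 8 : ℝ)) :
    R ≤ K ^ (8 / 7 : ℝ) * u ^ (17 / 7 : ℝ) := by
  rcases hR.eq_or_lt with rfl | hR
  · positivity
  have hpow : R ^ (7 / 8 : ℝ) ≤ K * u ^ (17 / 8 : ℝ) := by
    refine le_of_mul_le_mul_right ?_ (show 0 < R ^ (9 / 8 : ℝ) by positivity)
    rw [← Real.rpow_add hR]
    norm_num
    exact h
  calc R = (R ^ (7 / 8 : ℝ)) ^ (8 / 7 : ℝ) := by
        rw [← Real.rpow_mul hR.le]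
        norm_num
    _ ≤ (K * u ^ (17 / 8 : ℝ)) ^ (8 / 7 : ℝ) := by gcongr
    _ = K ^ (8 / 7 : ℝ) * u ^ (17 / 7 : ℝ) := by
        rw [Real.mul_rpow hK (by positivity), ← Real.rpow_mul hu]
        norm_num

lemma mul_rpow_mul_rpow_le_half {C u : ℝ} {N : ℕ} (hC : 1 ≤ C) (hN : 1 ≤ N) (hu0 : 0 ≤ u)
    (hu : u ≤ ((2 * C) ^ (8 / 7 : ℝ))⁻¹ * (N : ℝ) ^ (7 / 128 : ℝ)) :
    C * u ^ (17 / 8 : ℝ) * (N : ℝ) ^ (-(119 / 1024) : ℝ) ≤ 1 / 2 := by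
  have hconst : ((2 * C) ^ (17 / 7 : ℝ))⁻¹ ≤ (2 * C)⁻¹ := by
    gcongr
    exact Real.self_le_rpow_of_one_le (by linarith) (by norm_num)
  have hu' : u ^ (17 / 8 : ℝ) ≤ (2 * C)⁻¹ * (N : ℝ) ^ (119 / 1024 : ℝ) := calc
    u ^ (17 / 8 : ℝ) ≤ (((2 * C) ^ (8 / 7 : ℝ))⁻¹ * (N : ℝ) ^ (7 / 128 : ℝ)) ^ (17 / 8 : ℝ) := by
        gcongr
    _ = ((2 * C) ^ (17 / 7 : ℝ))⁻¹ * (N : ℝ) ^ (119 / 1024 : ℝ) := by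
        rw [Real.mul_rpow (by positivity) (by positivity), Real.inv_rpow (by positivity),
          ← Real.rpow_mul (by positivity), ← Real.rpow_mul (by positivity)]
        norm_num
    _ ≤ _ := by gcongr
  calc C * u ^ (17 / 8 : ℝ) * (N : ℝ) ^ (-(119 / 1024) : ℝ)
      ≤ C * ((2 * C)⁻¹ * (N : ℝ) ^ (119 / 1024 : ℝ)) * (N : ℝ) ^ (-(119 / 1024) : ℝ) := by gcongr
    _ = 1 / 2 := by
        rw [Real.rpow_neg N.cast_nonneg]
        field_simp

theorem exists_card_le : ∃ C : ℝ, 1 ≤ C ∧ ∀ (N : ℕ) (f : ℤ → ℂ) (A : Finset ℕ) (l : ℝ), 1 ≤ N →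
    A ⊆ range (4 * N ^ 2) → 0 < l → (∀ j ∈ A, l ≤ ‖quadSum N f (j / (4 * N ^ 2 : ℕ))‖) →
    N * energy N f / l ^ 2 ≤ C⁻¹ * (N : ℝ) ^ (7 / 128 : ℝ) →
    (#A : ℝ) ≤ C * (N * energy N f / l ^ 2) ^ (17 / 7 : ℝ) := by
  obtain ⟨C, hC, hlevel⟩ := exists_card_sq_le
  refine ⟨(2 * C) ^ (8 / 7 : ℝ), Real.one_le_rpow (by linarith) (by norm_num),
    fun N f A l hN hA hl hf hu => ?_⟩
  have hu0 : 0 ≤ N * energy N f / l ^ 2 := by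
    have := energy_nonneg N f
    positivity
  have hcard := hlevel N f A l hN hA hl hf
  have habsorb := mul_le_mul_of_nonneg_right (mul_rpow_mul_rpow_le_half hC hN hu0 hu)
    (sq_nonneg (#A : ℝ))
  exact le_rpow_of_sq_le (Nat.cast_nonneg _) (by linarith) hu0 (by linarith)

/-! ### The fourth moment -/

section FourthMoment

variable {N : ℕ}

/-- The pairs in `[-N, N]²` whose squares differ by `m`. -/
def sqDiffPairs (N : ℕ) (m : ℤ) : Finset (ℤ × ℤ) :=
  {p ∈ Icc (-N : ℤ) N ×ˢ Icc (-N : ℤ) N | p.1 ^ 2 - p.2 ^ 2 = m}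

/-- The coefficient of `e(m θ)` in `‖quadSum N f θ‖²`. -/
def sqDiffCoeff (N : ℕ) (f : ℤ → ℂ) (m : ℤ) : ℂ :=
  ∑ p ∈ sqDiffPairs N m, f p.1 * starRingEnd ℂ (f p.2)

lemma sq_sub_sq_eq_of_mem {m : ℤ} {p : ℤ × ℤ} (hp : p ∈ sqDiffPairs N m) :
    p.1 ^ 2 - p.2 ^ 2 = m := (mem_filter.1 hp).2

lemma sq_sub_sq_mem_Icc {p : ℤ × ℤ} (hp : p ∈ Icc (-N : ℤ) N ×ˢ Icc (-N : ℤ) N) :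
    p.1 ^ 2 - p.2 ^ 2 ∈ Icc (-(N : ℤ) ^ 2) ((N : ℤ) ^ 2) := by
  simp only [mem_product, mem_Icc] at hp ⊢
  have h1 := sq_le_sq' hp.1.1 hp.1.2
  have h2 := sq_le_sq' hp.2.1 hp.2.2
  constructor <;> linarith [sq_nonneg p.1, sq_nonneg p.2]

lemma card_sqDiffPairs_le (N : ℕ) {m : ℤ} (hm : m ≠ 0) :
    #(sqDiffPairs N m) ≤ 2 * #m.natAbs.divisors := by
  have hinj : Set.InjOn (fun p : ℤ × ℤ => p.1 - p.2) (sqDiffPairs N m) := by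
    rintro ⟨x, y⟩ hp ⟨x', y'⟩ hp' (hsub : x - y = x' - y')
    have hprod : (x - y) * (x + y) = m := by linear_combination sq_sub_sq_eq_of_mem hp
    have hprod' : (x - y) * (x' + y') = m := by
      linear_combination sq_sub_sq_eq_of_mem hp' + (x' + y') * hsub
    have hne : x - y ≠ 0 := left_ne_zero_of_mul (hprod ▸ hm)
    have hadd : x + y = x' + y' := mul_left_cancel₀ hne (hprod.trans hprod'.symm)
    rw [Prod.mk.injEq]
    omega
  have hsubset : (sqDiffPairs N m).image (fun p => p.1 - p.2) ⊆
      m.natAbs.divisors.image (fun d : ℕ => (d : ℤ)) ∪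
        m.natAbs.divisors.image (fun d : ℕ => -(d : ℤ)) := by
    rintro _ hd
    obtain ⟨p, hp, rfl⟩ := mem_image.1 hd
    have hdvd : p.1 - p.2 ∣ m := ⟨p.1 + p.2, by linear_combination -sq_sub_sq_eq_of_mem hp⟩
    have hmem : (p.1 - p.2).natAbs ∈ m.natAbs.divisors :=
      Nat.mem_divisors.2 ⟨Int.natAbs_dvd_natAbs.2 hdvd, Int.natAbs_ne_zero.2 hm⟩
    rw [mem_union, mem_image, mem_image]
    exact (Int.natAbs_eq (p.1 - p.2)).imp (fun h => ⟨_, hmem, h.symm⟩) fun h => ⟨_, hmem, h.symm⟩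
  rw [← card_image_of_injOn hinj, two_mul]
  exact (card_le_card hsubset).trans <|
    (card_union_le _ _).trans (add_le_add card_image_le card_image_le)

lemma sum_sqDiffPairs_zero_le (N : ℕ) (g : ℤ → ℝ) :
    ∑ p ∈ sqDiffPairs N 0, g p.1 * g p.2 ≤ 2 * ∑ x ∈ Icc (-N : ℤ) N, g x ^ 2 := by
  have hmem {p : ℤ × ℤ} (hp : p ∈ sqDiffPairs N 0) :
      (p.1 ∈ Icc (-N : ℤ) N ∧ p.2 ∈ Icc (-N : ℤ) N) ∧ (p.1 = p.2 ∨ p.1 = -p.2) :=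
    ⟨mem_product.1 (mem_filter.1 hp).1, sq_eq_sq_iff_eq_or_eq_neg.1
      (sub_eq_zero.1 (sq_sub_sq_eq_of_mem hp))⟩
  have hfst : ∑ p ∈ sqDiffPairs N 0, g p.1 ^ 2 ≤ 2 * ∑ x ∈ Icc (-N : ℤ) N, g x ^ 2 := by
    refine sum_comp_le_mul_sum (G := fun x => g x ^ 2) (fun p hp => (hmem hp).1.1) (fun x _ => ?_)
      fun x _ => sq_nonneg _
    have hfiber : {p ∈ sqDiffPairs N 0 | p.1 = x} ⊆ {(x, x), (x, -x)} := by
      rintro ⟨y, z⟩ hp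
      obtain ⟨hpair, hx : y = x⟩ := mem_filter.1 hp
      have hyz : y = z ∨ y = -z := (hmem hpair).2
      simp only [mem_insert, mem_singleton, Prod.mk.injEq]
      omega
    exact_mod_cast (card_le_card hfiber).trans card_le_two
  have hsnd : ∑ p ∈ sqDiffPairs N 0, g p.2 ^ 2 ≤ 2 * ∑ x ∈ Icc (-N : ℤ) N, g x ^ 2 := by
    refine sum_comp_le_mul_sum (G := fun x => g x ^ 2) (fun p hp => (hmem hp).1.2) (fun x _ => ?_)
      fun x _ => sq_nonneg _
    have hfiber : {p ∈ sqDiffPairs N 0 | p.2 = x} ⊆ {(x, x), (-x, x)} := by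
      rintro ⟨y, z⟩ hp
      obtain ⟨hpair, hx : z = x⟩ := mem_filter.1 hp
      have hyz : y = z ∨ y = -z := (hmem hpair).2
      simp only [mem_insert, mem_singleton, Prod.mk.injEq]
      omega
    exact_mod_cast (card_le_card hfiber).trans card_le_two
  calc ∑ p ∈ sqDiffPairs N 0, g p.1 * g p.2
      ≤ ∑ p ∈ sqDiffPairs N 0, (g p.1 ^ 2 / 2 + g p.2 ^ 2 / 2) :=
        sum_le_sum fun p _ => by linarith [two_mul_le_add_sq (g p.1) (g p.2)]
    _ ≤ 2 * ∑ x ∈ Icc (-N : ℤ) N, g x ^ 2 := by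
        rw [sum_add_distrib, ← sum_div, ← sum_div]
        linarith

lemma norm_quadSum_sq_eq (N : ℕ) (f : ℤ → ℂ) (θ : ℝ) : ((‖quadSum N f θ‖ ^ 2 : ℝ) : ℂ) =
    ∑ m ∈ Icc (-(N : ℤ) ^ 2) ((N : ℤ) ^ 2), sqDiffCoeff N f m * e (m * θ) := by
  rw [quadSum, norm_sum_sq_eq, ← sum_product',
    ← sum_fiberwise_of_maps_to fun p hp => sq_sub_sq_mem_Icc hp]
  refine sum_congr rfl fun m _ => ?_
  rw [sqDiffCoeff, sum_mul]
  refine sum_congr rfl fun p hp => ?_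
  have harg : (m : ℝ) * θ = θ * p.1 ^ 2 + -(θ * p.2 ^ 2) := by
    rw [← sq_sub_sq_eq_of_mem hp]
    push_cast
    ring
  rw [map_mul, conj_e, harg, e_add]
  ring

lemma sum_norm_quadSum_pow_four_eq (hN : 1 ≤ N) (f : ℤ → ℂ) :
    ∑ j ∈ range (4 * N ^ 2), ‖quadSum N f (j / (4 * N ^ 2 : ℕ))‖ ^ 4 =
      (4 * N ^ 2 : ℕ) * ∑ m ∈ Icc (-(N : ℤ) ^ 2) ((N : ℤ) ^ 2), ‖sqDiffCoeff N f m‖ ^ 2 := by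
  have hdistinct : ∀ a ∈ Icc (-(N : ℤ) ^ 2) ((N : ℤ) ^ 2), ∀ b ∈ Icc (-(N : ℤ) ^ 2) ((N : ℤ) ^ 2),
      ((4 * N ^ 2 : ℕ) : ℤ) ∣ a - b → a = b := by
    intro a ha b hb hdvd
    rw [mem_Icc] at ha hb
    have hN2 : (0 : ℤ) < N ^ 2 := by positivity
    refine sub_eq_zero.1 (Int.eq_zero_of_abs_lt_dvd hdvd ?_)
    rw [abs_lt]
    push_cast
    constructor <;> linarith
  rw [← parseval_mod (by positivity) hdistinct]
  refine sum_congr rfl fun j _ => ?_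
  simp only [mul_div_assoc]
  rw [← norm_quadSum_sq_eq, Complex.norm_real, Real.norm_of_nonneg (by positivity), ← pow_mul]

lemma norm_sqDiffCoeff_zero_le (N : ℕ) (f : ℤ → ℂ) : ‖sqDiffCoeff N f 0‖ ≤ 2 * energy N f := by
  refine (norm_sum_le _ _).trans ?_
  simp only [norm_mul, RCLike.norm_conj]
  exact sum_sqDiffPairs_zero_le N fun x => ‖f x‖

lemma norm_sqDiffCoeff_sq_le (N : ℕ) (f : ℤ → ℂ) {m : ℤ} (hm : m ≠ 0) :
    ‖sqDiffCoeff N f m‖ ^ 2 ≤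
      2 * #m.natAbs.divisors * ∑ p ∈ sqDiffPairs N m, ‖f p.1‖ ^ 2 * ‖f p.2‖ ^ 2 := by
  have hnorm : ‖sqDiffCoeff N f m‖ ≤ ∑ p ∈ sqDiffPairs N m, ‖f p.1‖ * ‖f p.2‖ := by
    refine (norm_sum_le _ _).trans_eq ?_
    simp only [norm_mul, RCLike.norm_conj]
  calc ‖sqDiffCoeff N f m‖ ^ 2 ≤ (∑ p ∈ sqDiffPairs N m, ‖f p.1‖ * ‖f p.2‖) ^ 2 := by gcongr
    _ ≤ #(sqDiffPairs N m) * ∑ p ∈ sqDiffPairs N m, (‖f p.1‖ * ‖f p.2‖) ^ 2 :=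
        sq_sum_le_card_mul_sum_sq
    _ ≤ 2 * #m.natAbs.divisors * ∑ p ∈ sqDiffPairs N m, ‖f p.1‖ ^ 2 * ‖f p.2‖ ^ 2 := by
        simp only [mul_pow]
        gcongr
        exact_mod_cast card_sqDiffPairs_le N hm

lemma sum_sum_sqDiffPairs_eq (N : ℕ) (f : ℤ → ℂ) :
    ∑ m ∈ Icc (-(N : ℤ) ^ 2) ((N : ℤ) ^ 2), ∑ p ∈ sqDiffPairs N m, ‖f p.1‖ ^ 2 * ‖f p.2‖ ^ 2 =
      energy N f ^ 2 := by
  rw [sq (energy N f), energy, sum_mul_sum, ← sum_product',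
    ← sum_fiberwise_of_maps_to fun p hp => sq_sub_sq_mem_Icc hp]
  rfl

lemma exists_norm_sqDiffCoeff_sq_le {ε : ℝ} (hε : 0 < ε) : ∃ C : ℝ, 1 ≤ C ∧
    ∀ (N : ℕ) (f : ℤ → ℂ), ∀ m ∈ (Icc (-(N : ℤ) ^ 2) ((N : ℤ) ^ 2)).erase 0,
    ‖sqDiffCoeff N f m‖ ^ 2 ≤
      2 * C * (N : ℝ) ^ ε * ∑ p ∈ sqDiffPairs N m, ‖f p.1‖ ^ 2 * ‖f p.2‖ ^ 2 := by
  obtain ⟨C, hC, hdiv⟩ := exists_card_divisors_le (half_pos hε)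
  refine ⟨C, hC, fun N f m hm => ?_⟩
  obtain ⟨hm0, hm⟩ := mem_erase.1 hm
  have hmN : m.natAbs ≤ N ^ 2 := by
    rw [mem_Icc] at hm
    zify
    exact abs_le.2 ⟨by linarith, hm.2⟩
  have hcard : (#m.natAbs.divisors : ℝ) ≤ C * (N : ℝ) ^ ε := calc
    (#m.natAbs.divisors : ℝ) ≤ C * (m.natAbs : ℝ) ^ (ε / 2) := hdiv _ (by omega)
    _ ≤ C * ((N : ℝ) ^ 2) ^ (ε / 2) := by
        gcongr
        exact_mod_cast hmN
    _ = C * (N : ℝ) ^ ε := by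
        rw [← Real.rpow_natCast_mul N.cast_nonneg]
        congr 2
        push_cast
        ring
  calc ‖sqDiffCoeff N f m‖ ^ 2 ≤ _ := norm_sqDiffCoeff_sq_le N f hm0
    _ ≤ 2 * (C * (N : ℝ) ^ ε) * ∑ p ∈ sqDiffPairs N m, ‖f p.1‖ ^ 2 * ‖f p.2‖ ^ 2 := by gcongr
    _ = _ := by ring

theorem exists_sum_norm_quadSum_pow_four_le {ε : ℝ} (hε : 0 < ε) : ∃ C : ℝ, 1 ≤ C ∧
    ∀ (N : ℕ) (f : ℤ → ℂ), 1 ≤ N →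
    ∑ j ∈ range (4 * N ^ 2), ‖quadSum N f (j / (4 * N ^ 2 : ℕ))‖ ^ 4 ≤
      C * (4 * N ^ 2 : ℕ) * (N : ℝ) ^ ε * energy N f ^ 2 := by
  obtain ⟨C, hC, hcoeff⟩ := exists_norm_sqDiffCoeff_sq_le hε
  refine ⟨4 + 2 * C, by linarith, fun N f hN => ?_⟩
  have hNε : 1 ≤ (N : ℝ) ^ ε := Real.one_le_rpow (by exact_mod_cast hN) hε.le
  have hzero : ‖sqDiffCoeff N f 0‖ ^ 2 ≤ 4 * (N : ℝ) ^ ε * energy N f ^ 2 := calc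
    ‖sqDiffCoeff N f 0‖ ^ 2 ≤ (2 * energy N f) ^ 2 := by
        gcongr
        exact norm_sqDiffCoeff_zero_le N f
    _ = 4 * 1 * energy N f ^ 2 := by ring
    _ ≤ 4 * (N : ℝ) ^ ε * energy N f ^ 2 := by gcongr
  have hnonzero : ∑ m ∈ (Icc (-(N : ℤ) ^ 2) ((N : ℤ) ^ 2)).erase 0, ‖sqDiffCoeff N f m‖ ^ 2 ≤
      2 * C * (N : ℝ) ^ ε * energy N f ^ 2 := by
    refine (sum_le_sum (hcoeff N f)).trans ?_
    rw [← mul_sum, ← sum_sum_sqDiffPairs_eq]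
    gcongr
    exact erase_subset _ _
  have hmem : (0 : ℤ) ∈ Icc (-(N : ℤ) ^ 2) ((N : ℤ) ^ 2) := by simp
  rw [sum_norm_quadSum_pow_four_eq hN, ← add_sum_erase _ _ hmem]
  calc (4 * N ^ 2 : ℕ) * (_ + _) ≤ (4 * N ^ 2 : ℕ) * (4 * (N : ℝ) ^ ε * energy N f ^ 2 +
        2 * C * (N : ℝ) ^ ε * energy N f ^ 2) := by gcongr
    _ = _ := by ring

end FourthMoment

/-! ### Moments on the grid -/

lemma norm_quadSum_le {N : ℕ} (hN : 1 ≤ N) (f : ℤ → ℂ) (θ : ℝ) :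
    ‖quadSum N f θ‖ ≤ 2 * √(N * energy N f) := by
  have hE := energy_nonneg N f
  have hcard : (#(Icc (-N : ℤ) N) : ℝ) ≤ 4 * N := by
    rw [Int.card_Icc]
    exact_mod_cast (by omega : ((N : ℤ) + 1 - -N).toNat ≤ 4 * N)
  refine le_of_sq_le_sq ?_ (by positivity)
  calc ‖quadSum N f θ‖ ^ 2 ≤ (∑ x ∈ Icc (-N : ℤ) N, ‖f x‖) ^ 2 := by
        gcongr
        refine (norm_sum_le _ _).trans_eq ?_
        simp only [norm_mul, norm_e, mul_one]
    _ ≤ #(Icc (-N : ℤ) N) * energy N f := sq_sum_le_card_mul_sum_sq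
    _ ≤ 4 * N * energy N f := by gcongr
    _ = (2 * √(N * energy N f)) ^ 2 := by
        rw [mul_pow, Real.sq_sqrt (by positivity)]
        ring

section Dyadic

variable {ι : Type*} {J : Finset ι} {v : ι → ℝ} {n : ℕ} {a C τ : ℝ}

lemma sum_filter_lt_pow_le_of_card_le (hτ : 0 ≤ τ) (hv1 : ∀ j ∈ J, v j ≤ 1) (ha : a < n)
    (hC : 0 ≤ C) (hcard : ∀ k : ℕ, τ < (1 / 2) ^ k →
      (#{j ∈ J | (1 / 2) ^ (k + 1) ≤ v j} : ℝ) ≤ C * ((2 : ℝ) ^ k) ^ a) :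
    ∑ j ∈ J with τ < v j, v j ^ n ≤ C * (1 - 2 ^ (-(n - a)))⁻¹ := by
  have hscale : ∀ j ∈ {j ∈ J | τ < v j}, ∃ k : ℕ, (1 / 2) ^ (k + 1) < v j ∧ v j ≤ (1 / 2) ^ k := by
    intro j hj
    rw [mem_filter] at hj
    exact exists_nat_pow_near_of_lt_one (hτ.trans_lt hj.2) (hv1 j hj.1) (by norm_num) (by norm_num)
  choose! k hlt hle using hscale
  calc ∑ j ∈ J with τ < v j, v j ^ n ≤ ∑ j ∈ J with τ < v j, ((1 / 2 : ℝ) ^ k j) ^ n := by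
        refine sum_le_sum fun j hj => ?_
        have := hτ.trans (mem_filter.1 hj).2.le
        have := hle j hj
        gcongr
    _ = ∑ i ∈ image k {j ∈ J | τ < v j},
          (#{j ∈ {j ∈ J | τ < v j} | k j = i} : ℝ) * ((1 / 2 : ℝ) ^ i) ^ n := by
        simp only [sum_comp (fun i => ((1 / 2 : ℝ) ^ i) ^ n) k, nsmul_eq_mul]
    _ ≤ ∑ i ∈ image k {j ∈ J | τ < v j}, C * ((2 : ℝ) ^ i) ^ (-(n - a)) := by
        refine sum_le_sum fun i hi => ?_
        obtain ⟨j, hj, rfl⟩ := mem_image.1 hi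
        have hsubset : {j' ∈ {j ∈ J | τ < v j} | k j' = k j} ⊆
            {j' ∈ J | (1 / 2) ^ (k j + 1) ≤ v j'} := by
          intro j' hj'
          obtain ⟨hj', heq⟩ := mem_filter.1 hj'
          exact mem_filter.2 ⟨(mem_filter.1 hj').1, heq ▸ (hlt j' hj').le⟩
        calc _ ≤ C * ((2 : ℝ) ^ k j) ^ a * ((1 / 2 : ℝ) ^ k j) ^ n := by
              gcongr
              exact (Nat.cast_le.2 (card_le_card hsubset)).trans
                (hcard _ ((mem_filter.1 hj).2.trans_le (hle j hj)))
          _ = C * ((2 : ℝ) ^ k j) ^ (-(n - a)) := by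
              rw [one_div_pow, one_div, inv_pow, neg_sub, Real.rpow_sub_natCast (by positivity)]
              ring
    _ ≤ C * (1 - 2 ^ (-(n - a)))⁻¹ := by
        rw [← mul_sum]
        gcongr
        exact sum_two_pow_rpow_neg_le (sub_pos.2 ha) _

lemma sum_pow_succ_le_of_card_le (hτ : 0 ≤ τ) (hv0 : ∀ j ∈ J, 0 ≤ v j) (hv1 : ∀ j ∈ J, v j ≤ 1)
    (ha : a < (n + 1 : ℕ)) (hC : 0 ≤ C) (hcard : ∀ k : ℕ, τ < (1 / 2) ^ k →
      (#{j ∈ J | (1 / 2) ^ (k + 1) ≤ v j} : ℝ) ≤ C * ((2 : ℝ) ^ k) ^ a) :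
    ∑ j ∈ J, v j ^ (n + 1) ≤ C * (1 - 2 ^ (-((n + 1 : ℕ) - a)))⁻¹ + τ * ∑ j ∈ J, v j ^ n := by
  rw [← sum_filter_add_sum_filter_not J (fun j => τ < v j)]
  refine add_le_add (sum_filter_lt_pow_le_of_card_le hτ hv1 ha hC hcard) ?_
  calc ∑ j ∈ J with ¬τ < v j, v j ^ (n + 1) ≤ ∑ j ∈ J with ¬τ < v j, τ * v j ^ n := by
        refine sum_le_sum fun j hj => ?_
        rw [mem_filter, not_lt] at hj
        rw [pow_succ']
        exact mul_le_mul_of_nonneg_right hj.2 (pow_nonneg (hv0 j hj.1) n)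
    _ ≤ τ * ∑ j ∈ J, v j ^ n := by
        rw [mul_sum]
        exact sum_le_sum_of_subset_of_nonneg (filter_subset _ _) fun j hj _ =>
          mul_nonneg hτ (pow_nonneg (hv0 j hj) n)

end Dyadic

lemma exists_card_normalized_le : ∃ C : ℝ, 1 ≤ C ∧ ∀ (N : ℕ) (f : ℤ → ℂ) (k : ℕ), 1 ≤ N →
    0 < energy N f → C * (N : ℝ) ^ (-(7 / 256) : ℝ) < (1 / 2) ^ k →
    (#{j ∈ range (4 * N ^ 2) | (1 / 2) ^ (k + 1) ≤
      ‖quadSum N f ((j : ℕ) / (4 * N ^ 2 : ℕ))‖ / (2 * √(N * energy N f))} : ℝ) ≤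
        C * ((2 : ℝ) ^ k) ^ (34 / 7 : ℝ) := by
  obtain ⟨C, hC, hlevel⟩ := exists_card_le
  refine ⟨C, hC, fun N f k hN hE hk => ?_⟩
  have hD : 0 < √(N * energy N f) := Real.sqrt_pos.2 (by positivity)
  have hratio : N * energy N f / (√(N * energy N f) * (1 / 2) ^ k) ^ 2 = ((2 : ℝ) ^ k) ^ 2 := by
    rw [mul_pow, Real.sq_sqrt (by positivity), one_div_pow]
    field_simp
  have hscale : (2 : ℝ) ^ k ≤ C⁻¹ * (N : ℝ) ^ (7 / 256 : ℝ) := by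
    rw [Real.rpow_neg N.cast_nonneg, one_div_pow, ← div_eq_mul_inv,
      lt_one_div (by positivity) (by positivity), one_div_div] at hk
    rw [inv_mul_eq_div]
    exact hk.le
  have hlarge : ((2 : ℝ) ^ k) ^ 2 ≤ C⁻¹ * (N : ℝ) ^ (7 / 128 : ℝ) := calc
    ((2 : ℝ) ^ k) ^ 2 ≤ (C⁻¹ * (N : ℝ) ^ (7 / 256 : ℝ)) ^ 2 := by gcongr
    _ = C⁻¹ ^ 2 * (N : ℝ) ^ (7 / 128 : ℝ) := by
        rw [mul_pow, ← Real.rpow_mul_natCast N.cast_nonneg]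
        norm_num
    _ ≤ C⁻¹ * (N : ℝ) ^ (7 / 128 : ℝ) := by
        gcongr
        exact pow_le_of_le_one (by positivity) (inv_le_one_of_one_le₀ hC) two_ne_zero
  have hcard := hlevel N f {j ∈ range (4 * N ^ 2) | (1 / 2) ^ (k + 1) ≤
      ‖quadSum N f (j / (4 * N ^ 2 : ℕ))‖ / (2 * √(N * energy N f))}
    (√(N * energy N f) * (1 / 2) ^ k) hN (filter_subset _ _) (by positivity) (fun j hj => ?_)
    (by rwa [hratio])
  · rwa [hratio, ← Real.rpow_natCast_mul (by positivity),
      show ((2 : ℕ) * (17 / 7) : ℝ) = 34 / 7 by norm_num] at hcard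
  · have hj := (mem_filter.1 hj).2
    rw [le_div_iff₀ (by positivity), pow_succ] at hj
    linarith

lemma exists_sum_normalized_pow_five_le : ∃ C : ℝ, 1 ≤ C ∧ ∀ (N : ℕ) (f : ℤ → ℂ), 1 ≤ N →
    0 < energy N f → ∑ j ∈ range (4 * N ^ 2),
      (‖quadSum N f (j / (4 * N ^ 2 : ℕ))‖ / (2 * √(N * energy N f))) ^ 5 ≤ C := by
  obtain ⟨C, hC, hcard⟩ := exists_card_normalized_le
  obtain ⟨D, hD, hfourth⟩ := exists_sum_norm_quadSum_pow_four_le (ε := 7 / 256) (by norm_num)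
  set G : ℝ := (1 - 2 ^ (-((4 + 1 : ℕ) - 34 / 7 : ℝ)))⁻¹
  have hG : 1 ≤ G := by
    have hsum := sum_two_pow_rpow_neg_le (c := (4 + 1 : ℕ) - 34 / 7) (by norm_num) {0}
    rwa [sum_singleton, pow_zero, Real.one_rpow] at hsum
  have hCG : 1 ≤ C * G := one_le_mul_of_one_le_of_one_le hC hG
  refine ⟨C * G + C * D / 4, le_add_of_le_of_nonneg hCG (by positivity), fun N f hN hE => ?_⟩
  have hdyadic := sum_pow_succ_le_of_card_le (n := 4) (J := range (4 * N ^ 2))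
    (v := fun j => ‖quadSum N f (j / (4 * N ^ 2 : ℕ))‖ / (2 * √(N * energy N f)))
    (τ := C * (N : ℝ) ^ (-(7 / 256) : ℝ)) (by positivity) (fun j _ => by positivity)
    (fun j _ => div_le_one_of_le₀ (norm_quadSum_le hN f _) (by positivity)) (a := 34 / 7)
    (by norm_num) (zero_le_one.trans hC) (fun k hk => hcard N f k hN hE hk)
  refine hdyadic.trans (add_le_add le_rfl ?_)
  calc C * (N : ℝ) ^ (-(7 / 256) : ℝ) * ∑ j ∈ range (4 * N ^ 2),
        (‖quadSum N f (j / (4 * N ^ 2 : ℕ))‖ / (2 * √(N * energy N f))) ^ 4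
      ≤ C * (N : ℝ) ^ (-(7 / 256) : ℝ) *
          (D * (4 * N ^ 2 : ℕ) * (N : ℝ) ^ (7 / 256 : ℝ) * energy N f ^ 2 /
            (2 * √(N * energy N f)) ^ 4) := by
        simp only [div_pow, ← sum_div]
        gcongr
        exact hfourth N f hN
    _ = C * D / 4 := by
        rw [show (2 * √(N * energy N f)) ^ 4 = 16 * (√(N * energy N f) ^ 2) ^ 2 by ring,
          Real.sq_sqrt (by positivity), Real.rpow_neg N.cast_nonneg]
        push_cast
        field_simp
        norm_num

theorem exists_sum_norm_quadSum_pow_le : ∃ C : ℝ, 1 ≤ C ∧ ∀ (n N : ℕ) (f : ℤ → ℂ), 5 ≤ n → 1 ≤ N →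
    ∑ j ∈ range (4 * N ^ 2), ‖quadSum N f (j / (4 * N ^ 2 : ℕ))‖ ^ n ≤
      C * (2 * √(N * energy N f)) ^ n := by
  obtain ⟨C, hC, hfive⟩ := exists_sum_normalized_pow_five_le
  refine ⟨C, hC, fun n N f hn hN => ?_⟩
  have hsup := norm_quadSum_le hN f
  rcases (energy_nonneg N f).eq_or_lt with hE | hE
  · rw [← hE, mul_zero, Real.sqrt_zero, mul_zero] at hsup ⊢
    have hn0 : n ≠ 0 := by omega
    simp [fun θ => (hsup θ).antisymm (norm_nonneg _), hn0]
  · rw [← div_le_iff₀ (by positivity), sum_div]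
    refine (sum_le_sum fun j _ => ?_).trans (hfive N f hN hE)
    rw [← div_pow]
    exact pow_le_pow_of_le_one (by positivity) (div_le_one_of_le₀ (hsup _) (by positivity)) hn

/-! ### From the grid to the circle -/

lemma integral_Ioc_zero_one_le_div {g : ℝ → ℝ} (hg : Continuous g) {M : ℕ} (hM : 0 < M) {B : ℝ}
    (hB : ∀ t : ℝ, ∑ j ∈ range M, g (t + j / M) ≤ B) : ∫ α in Set.Ioc (0 : ℝ) 1, g α ≤ B / M := by
  have hM' : (M : ℝ) ≠ 0 := Nat.cast_ne_zero.2 hM.ne'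
  calc ∫ α in Set.Ioc (0 : ℝ) 1, g α = ∫ α in (0 : ℝ)..1, g α :=
        (intervalIntegral.integral_of_le zero_le_one).symm
    _ = ∑ j ∈ range M, ∫ α in (j / M : ℝ)..((j + 1 : ℕ) / M : ℝ), g α := by
        rw [intervalIntegral.sum_integral_adjacent_intervals (a := fun j : ℕ => (j / M : ℝ))
          fun j _ => hg.intervalIntegrable _ _, Nat.cast_zero, zero_div, div_self hM']
    _ = ∑ j ∈ range M, ∫ t in (0 : ℝ)..(1 / M), g (t + j / M) := by
        refine sum_congr rfl fun j _ => ?_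
        rw [intervalIntegral.integral_comp_add_right, zero_add, ← add_div, Nat.cast_add_one,
          add_comm (1 : ℝ)]
    _ = ∫ t in (0 : ℝ)..(1 / M), ∑ j ∈ range M, g (t + j / M) := by
        refine (intervalIntegral.integral_finsetSum fun j _ => ?_).symm
        exact (by fun_prop : Continuous fun t : ℝ => g (t + j / M)).intervalIntegrable _ _
    _ ≤ ∫ _ in (0 : ℝ)..(1 / M), B :=
        intervalIntegral.integral_mono_on (by positivity)
          ((by fun_prop : Continuous fun t => ∑ j ∈ range M, g (t + j / M)).intervalIntegrable _ _)
          intervalIntegrable_const fun t _ => hB t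
    _ = B / M := by
        rw [intervalIntegral.integral_const, sub_zero, smul_eq_mul, one_div_mul_eq_div]

lemma continuous_quadSum (N : ℕ) (f : ℤ → ℂ) : Continuous (quadSum N f) := by
  unfold quadSum
  fun_prop

lemma quadSum_add (N : ℕ) (f : ℤ → ℂ) (t θ : ℝ) :
    quadSum N f (t + θ) = quadSum N (fun x => f x * e (t * x ^ 2)) θ := by
  simp only [quadSum, add_mul, e_add, mul_assoc]

lemma energy_mul_e (N : ℕ) (f : ℤ → ℂ) (t : ℝ) :
    energy N (fun x => f x * e (t * x ^ 2)) = energy N f := by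
  simp only [energy, norm_mul, norm_e, mul_one]

lemma quadSum_eq_sum_exp (N : ℕ) (f : ℤ → ℂ) (α : ℝ) :
    quadSum N f α = ∑ x ∈ Icc (-(N : ℤ)) N,
      f x * Complex.exp (2 * Real.pi * Complex.I * α * (x : ℂ) ^ 2) := by
  refine sum_congr rfl fun x _ => ?_
  rw [e_eq_exp]
  push_cast
  ring_nf

theorem exists_integral_norm_quadSum_pow_le : ∃ C : ℝ, 1 ≤ C ∧ ∀ (n N : ℕ) (f : ℤ → ℂ),
    5 ≤ n → 1 ≤ N → ∫ α in Set.Ioc (0 : ℝ) 1, ‖quadSum N f α‖ ^ n ≤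
      C * (2 * √(N * energy N f)) ^ n / (4 * N ^ 2) := by
  obtain ⟨C, hC, hgrid⟩ := exists_sum_norm_quadSum_pow_le
  refine ⟨C, hC, fun n N f hn hN => ?_⟩
  have hM : 0 < 4 * N ^ 2 := by positivity
  have htranslate (t : ℝ) : ∑ j ∈ range (4 * N ^ 2), ‖quadSum N f (t + j / (4 * N ^ 2 : ℕ))‖ ^ n ≤
      C * (2 * √(N * energy N f)) ^ n := by
    simp only [quadSum_add]
    rw [← energy_mul_e N f t]
    exact hgrid n N _ hn hN
  exact_mod_cast integral_Ioc_zero_one_le_div ((continuous_quadSum N f).norm.pow n) hM htranslate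

lemma sqrt_mul_pow_div_sq {x y : ℝ} (hx : 0 < x) (hy : 0 ≤ y) {n : ℕ} (hn : 2 ≤ n) :
    √(x * y) ^ n / x ^ 2 = x ^ (n - 2) * (x⁻¹ * y) ^ ((n : ℝ) / 2) := by
  have hsqrt : √(x * y) = x * √(x⁻¹ * y) := by
    rw [show x * y = x ^ 2 * (x⁻¹ * y) by field_simp, Real.sqrt_mul (by positivity),
      Real.sqrt_sq hx.le]
  have hpow : √(x⁻¹ * y) ^ n = (x⁻¹ * y) ^ ((n : ℝ) / 2) := by
    rw [Real.sqrt_eq_rpow, ← Real.rpow_mul_natCast (by positivity), one_div_mul_eq_div]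
  rw [hsqrt, mul_pow, hpow, mul_div_right_comm, pow_sub₀ x hx.ne' hn, div_eq_mul_inv]

end DiscreteRestriction

/-- discrete restriction estimate for the parabola: for `n ≥ 5` there is a
constant `C = C(n)` so that for all `N ≥ 1` and `f : ℤ → ℂ`,
`∫₀¹ |∑_{|x| ≤ N} f(x) e(α x²)|^n dα ≤ C N^{n-2} (N⁻¹ ∑_{|x| ≤ N} |f(x)|²)^{n/2}`. -/
theorem statement9 (n : ℕ) (hn : 5 ≤ n) :
    ∃ C : ℝ, 0 < C ∧ ∀ N : ℕ, 1 ≤ N → ∀ f : ℤ → ℂ,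
      (∫ α in Set.Ioc (0 : ℝ) 1,
          ‖∑ x ∈ Finset.Icc (-(N : ℤ)) (N : ℤ),
              f x * Complex.exp (2 * Real.pi * Complex.I * (α : ℂ) * (x : ℂ) ^ 2)‖ ^ n)
        ≤ C * (N : ℝ) ^ (n - 2) *
            ((N : ℝ)⁻¹ * ∑ x ∈ Finset.Icc (-(N : ℤ)) (N : ℤ), ‖f x‖ ^ 2) ^ ((n : ℝ) / 2) := by
  obtain ⟨C, hC, hmoment⟩ := DiscreteRestriction.exists_integral_norm_quadSum_pow_le
  refine ⟨C * 2 ^ n / 4, by positivity, fun N hN f => ?_⟩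
  have hN' : (0 : ℝ) < N := Nat.cast_pos.2 hN
  set E := DiscreteRestriction.energy N f
  simp only [← DiscreteRestriction.quadSum_eq_sum_exp]
  calc ∫ α in Set.Ioc (0 : ℝ) 1, ‖DiscreteRestriction.quadSum N f α‖ ^ n
      ≤ C * (2 * √(N * E)) ^ n / (4 * N ^ 2) := hmoment n N f hn hN
    _ = C * 2 ^ n / 4 * (√(N * E) ^ n / N ^ 2) := by ring
    _ = C * 2 ^ n / 4 * (N : ℝ) ^ (n - 2) * ((N : ℝ)⁻¹ * E) ^ ((n : ℝ) / 2) := by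
        rw [DiscreteRestriction.sqrt_mul_pow_div_sq hN' (DiscreteRestriction.energy_nonneg N f)
          (by omega), mul_assoc]
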